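/- arXiv:1303.6915 — 2 statements merged into one kernel-verified Lean document; each statement's English description precedes it below -/
import Mathlib

section
/- Let q ≥ 3 and let a₁ ≤ a₂ ≤ ⋯ ≤ a_q be positive integers, with V = ℂ^{a₁+1} ⊗ ⋯ ⊗ ℂ^{a_q+1}. If k is a positive integer with k ≤ (Π_{i=1}^q(a_i+1) − (a₁+a₂+a₃+1)·Π_{i=3}^q(a_i+1))/(1+Σ_{i=1}^q a_i), then there is a polynomial function F on W_k, not identically zero, such that whenever F ≠ 0 at ((v_{i,j}))_{i,j} ∈ W_k, the sum of the tangent spaces T_{t₁} + ⋯ + T_{t_k} at the decomposable tensors tᵢ = v_{i,1}⊗⋯⊗v_{i,q} has dimension exactly k(1+Σ_{i=1}^q a_i). (By Terracini's lemma this says that the k-th secant variety of the Segre variety has the expected dimension k(1+Σ_{i=1}^q a_i) − 1.) -/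
open scoped TensorProduct
open PiTensorProduct

noncomputable section

/-- The space of tensors `V = ℂ^{a₁+1} ⊗ ⋯ ⊗ ℂ^{a_q+1}`. -/
abbrev Ten (q : ℕ) (a : Fin q → ℕ) : Type :=
  ⨂[ℂ] i : Fin q, (Fin (a i + 1) → ℂ)

/-- Index type for the coordinates on the parameter space `W_k`. -/
abbrev WIdx (q : ℕ) (a : Fin q → ℕ) (k : ℕ) : Type :=
  Fin k × Σ j : Fin q, Fin (a j + 1)

/-- Index type for the standard (decomposable) basis of `Ten q a`. -/
abbrev BIdx (q : ℕ) (a : Fin q → ℕ) : Type := ∀ j : Fin q, Fin (a j + 1)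

/-- A tensor is decomposable if it is `v₁ ⊗ ⋯ ⊗ v_q` with all `vᵢ ≠ 0`. -/
def IsDecomposable {q : ℕ} {a : Fin q → ℕ} (t : Ten q a) : Prop :=
  ∃ v : ∀ j : Fin q, Fin (a j + 1) → ℂ, (∀ j, v j ≠ 0) ∧ t = tprod ℂ v

/-- The affine tangent space at `v₁ ⊗ ⋯ ⊗ v_q` to the cone over the Segre variety:
the span of all tensors obtained by replacing one factor of `v` by an arbitrary vector. -/
def tangent {q : ℕ} (a : Fin q → ℕ) (v : ∀ j : Fin q, Fin (a j + 1) → ℂ) :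
    Submodule ℂ (Ten q a) :=
  Submodule.span ℂ
    {x | ∃ (j : Fin q) (u : Fin (a j + 1) → ℂ), x = tprod ℂ (Function.update v j u)}

/-- The map `Φ : W_k → V` sending a `k`-tuple of factor vectors to the sum of the
corresponding decomposable tensors. -/
def Phi {q : ℕ} (a : Fin q → ℕ) {k : ℕ}
    (p : Fin k → ∀ j : Fin q, Fin (a j + 1) → ℂ) : Ten q a :=
  ∑ i, tprod ℂ (p i)

/-- Evaluation of a polynomial function on `W_k` at a parameter point. -/
def evalW {q : ℕ} {a : Fin q → ℕ} {k : ℕ}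
    (F : MvPolynomial (WIdx q a k) ℂ)
    (p : Fin k → ∀ j : Fin q, Fin (a j + 1) → ℂ) : ℂ :=
  MvPolynomial.eval (fun x => p x.1 x.2.1 x.2.2) F

/-- `k`-identifiability of the Segre product `ℙ^{a₁} × ⋯ × ℙ^{a_q}`:
there is a nonzero polynomial function `F` on `W_k` such that whenever `F(p) ≠ 0`,
the tensor `Φ(p)` has a rank-`k` decomposition, and any two rank-`k` decompositions
of `Φ(p)` agree as multisets of decomposable tensors. -/
def Identifiable (q : ℕ) (a : Fin q → ℕ) (k : ℕ) : Prop :=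
  ∃ F : MvPolynomial (WIdx q a k) ℂ,
    (∃ p, evalW F p ≠ 0) ∧
    ∀ p, evalW F p ≠ 0 →
      ((∃ t : Fin k → Ten q a, (∀ i, IsDecomposable (t i)) ∧ ∑ i, t i = Phi a p) ∧
       ∀ s t : Fin k → Ten q a,
         (∀ i, IsDecomposable (s i)) → (∀ i, IsDecomposable (t i)) →
         ∑ i, s i = Phi a p → ∑ i, t i = Phi a p →
         Finset.univ.val.map s = Finset.univ.val.map t)

/-- The standard decomposable basis vector of `Ten q a` indexed by `f`. -/
def basisVec {q : ℕ} (a : Fin q → ℕ) (f : BIdx q a) : Ten q a :=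
  tprod ℂ fun j => Pi.single (f j) 1

/-- The vector of `Ten q a` with coordinates `c` in the standard basis. -/
def fromCoords {q : ℕ} (a : Fin q → ℕ) (c : BIdx q a → ℂ) : Ten q a :=
  ∑ f : BIdx q a, c f • basisVec a f

/-- Evaluation of a polynomial function on `W_k × V^e` at a parameter point. -/
def evalWV {q : ℕ} {a : Fin q → ℕ} {k e : ℕ}
    (F : MvPolynomial (WIdx q a k ⊕ (Fin e × BIdx q a)) ℂ)
    (p : Fin k → ∀ j : Fin q, Fin (a j + 1) → ℂ)
    (c : Fin e → BIdx q a → ℂ) : ℂ :=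
  MvPolynomial.eval (Sum.elim (fun x => p x.1 x.2.1 x.2.2) (fun y => c y.1 y.2)) F

/-- `TangentGeneral q a k d` says: the general linear subspace of `V` of dimension `d`
which is tangent to the Segre at `k` general points is tangent only at those points.
Concretely, with `e = d - k(1 + Σᵢ aᵢ)`, there is a nonzero polynomial function `F` on
`W_k × V^e` such that whenever `F ≠ 0` at `(p, c)`, the space `L` spanned by the tangent
spaces at the `k` decomposable tensors determined by `p` together with the `e` extra
vectors determined by `c` has dimension exactly `d`, and any decomposable tensor whose
tangent space lies in `L` is a scalar multiple of one of the `k` given ones. -/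
def TangentGeneral (q : ℕ) (a : Fin q → ℕ) (k d : ℕ) : Prop :=
  ∃ F : MvPolynomial (WIdx q a k ⊕ (Fin (d - k * (1 + ∑ j, a j)) × BIdx q a)) ℂ,
    (∃ p c, evalWV F p c ≠ 0) ∧
    ∀ p c, evalWV F p c ≠ 0 →
      (Module.finrank ℂ
          ↥((⨆ i, tangent a (p i)) ⊔
            Submodule.span ℂ (Set.range fun m => fromCoords a (c m))) = d ∧
       ∀ w : ∀ j : Fin q, Fin (a j + 1) → ℂ, (∀ j, w j ≠ 0) →
         tangent a w ≤
           (⨆ i, tangent a (p i)) ⊔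
             Submodule.span ℂ (Set.range fun m => fromCoords a (c m)) →
         ∃ (i : Fin k) (t : ℂ), tprod ℂ w = t • tprod ℂ (p i))

/-! ### Generic points of a parameter space -/

section Generic

variable {σ E : Type*} [AddCommGroup E] [Module ℂ E]

/-- A map out of an affine parameter space is polynomial if all its scalar components are. -/
def IsPolyMap (f : (σ → ℂ) → E) : Prop :=
  ∀ φ : E →ₗ[ℂ] ℂ, ∃ P : MvPolynomial σ ℂ, ∀ x, φ (f x) = MvPolynomial.eval x P

/-- A property holds generically if it holds off the zero locus of a nonzero polynomial. -/
def Generically (Q : (σ → ℂ) → Prop) : Prop :=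
  ∃ F : MvPolynomial σ ℂ, (∃ x, MvPolynomial.eval x F ≠ 0) ∧
    ∀ x, MvPolynomial.eval x F ≠ 0 → Q x

theorem Generically.exists {Q : (σ → ℂ) → Prop} (h : Generically Q) : ∃ x, Q x := by
  obtain ⟨F, ⟨x, hx⟩, h⟩ := h
  exact ⟨x, h x hx⟩

theorem Generically.forall {ι : Type*} [Finite ι] {Q : ι → (σ → ℂ) → Prop}
    (h : ∀ i, Generically (Q i)) : Generically fun x => ∀ i, Q i x := by
  cases nonempty_fintype ι
  choose F hF hQ using h
  refine ⟨∏ i, F i, ?_, fun x hx i => hQ i x ?_⟩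
  · have h0 : ∏ i, F i ≠ 0 := Finset.prod_ne_zero_iff.2 fun i _ h0 => by
      obtain ⟨x, hx⟩ := hF i
      simp [h0] at hx
    by_contra! hx
    exact h0 (MvPolynomial.funext fun x => by simpa using hx x)
  · rw [map_prod] at hx
    exact Finset.prod_ne_zero_iff.1 hx i (Finset.mem_univ i)

theorem Generically.and {Q Q' : (σ → ℂ) → Prop} (h : Generically Q) (h' : Generically Q') :
    Generically fun x => Q x ∧ Q' x := by
  obtain ⟨F, hF, hFx⟩ := Generically.forall
    (Q := fun b : Bool => if b then Q else Q') (by rintro (_ | _) <;> assumption)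
  exact ⟨F, hF, fun x hx => ⟨hFx x hx true, hFx x hx false⟩⟩

theorem IsPolyMap.smul_const {P : MvPolynomial σ ℂ} (e : E) :
    IsPolyMap fun x => MvPolynomial.eval x P • e :=
  fun φ => ⟨P * MvPolynomial.C (φ e), fun x => by simp⟩

theorem IsPolyMap.sum {ι : Type*} (s : Finset ι) {f : ι → (σ → ℂ) → E}
    (h : ∀ i ∈ s, IsPolyMap (f i)) : IsPolyMap fun x => ∑ i ∈ s, f i x := by
  intro φ
  choose! P hP using fun i (hi : i ∈ s) => h i hi φ
  exact ⟨∑ i ∈ s, P i, fun x => by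
    rw [map_sum, map_sum]; exact Finset.sum_congr rfl fun i hi => hP i hi x⟩

theorem isPolyMap_pi {ι : Type*} [Finite ι] {F : ι → Type*} [∀ i, AddCommGroup (F i)]
    [∀ i, Module ℂ (F i)] {f : (σ → ℂ) → ∀ i, F i}
    (h : ∀ i, IsPolyMap fun x => f x i) : IsPolyMap f := by
  classical
  cases nonempty_fintype ι
  intro φ
  choose P hP using fun i => h i (φ ∘ₗ LinearMap.single ℂ F i)
  refine ⟨∑ i, P i, fun x => ?_⟩
  conv_lhs => rw [← Finset.univ_sum_single (f x), map_sum]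
  rw [map_sum]
  exact Finset.sum_congr rfl fun i _ => hP i x

theorem isPolyMap_scalar {f : (σ → ℂ) → ℂ} (P : MvPolynomial σ ℂ)
    (h : ∀ x, f x = MvPolynomial.eval x P) : IsPolyMap f := by
  have : f = fun x => MvPolynomial.eval x P • (1 : ℂ) := by
    funext x; simp [h]
  rw [this]
  exact IsPolyMap.smul_const 1

/-- Linear independence of a family of vectors depending polynomially on parameters is an
open condition. -/
theorem generically_linearIndependent {ι : Type*} [Fintype ι] {g : ι → (σ → ℂ) → E}
    (hg : ∀ i, IsPolyMap (g i)) {x₀ : σ → ℂ} (h : LinearIndependent ℂ fun i => g i x₀) :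
    Generically fun x => LinearIndependent ℂ fun i => g i x := by
  classical
  obtain ⟨φ, hφ⟩ := (Fintype.linearCombination ℂ fun i => g i x₀).exists_leftInverse_of_injective
    (LinearMap.ker_eq_bot.2 h.fintypeLinearCombination_injective)
  choose P hP using fun i j => hg i (LinearMap.proj j ∘ₗ φ)
  have hev : ∀ x, MvPolynomial.eval x (Matrix.det (Matrix.of P)) =
      Matrix.det (Matrix.of fun i j => φ (g i x) j) := fun x => by
    rw [RingHom.map_det]
    congr 1
    ext i j
    exact (hP i j x).symm
  refine ⟨Matrix.det (Matrix.of P), ⟨x₀, ?_⟩, fun x hx => ?_⟩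
  · have h1 : (Matrix.of fun i j => φ (g i x₀) j) = (1 : Matrix ι ι ℂ) := by
      ext i j
      have := LinearMap.congr_fun hφ (Pi.single i 1)
      simp only [LinearMap.comp_apply, Fintype.linearCombination_apply_single, one_smul,
        LinearMap.id_apply] at this
      simp [this, Matrix.one_apply, Pi.single_apply, eq_comm]
    rw [hev, h1]
    simp
  · rw [hev] at hx
    exact LinearIndependent.of_comp φ (Matrix.linearIndependent_rows_of_det_ne_zero hx)

/-- Lower semicontinuity of the dimension of the span of a polynomial family of vectors. -/
theorem generically_le_finrank_span [FiniteDimensional ℂ E] {ι : Type*} {g : ι → (σ → ℂ) → E}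
    (hg : ∀ i, IsPolyMap (g i)) {r : ℕ} {x₀ : σ → ℂ}
    (h : r ≤ Module.finrank ℂ (Submodule.span ℂ (Set.range fun i => g i x₀))) :
    Generically fun x => r ≤ Module.finrank ℂ (Submodule.span ℂ (Set.range fun i => g i x)) := by
  obtain ⟨f, hf, -, hli⟩ :=
    Submodule.exists_fun_fin_finrank_span_eq ℂ (Set.range fun i => g i x₀)
  choose c hc using hf
  obtain ⟨F, hF, hFx⟩ := generically_linearIndependent (g := fun i : Fin r => g (c (Fin.castLE h i)))
    (fun i => hg _) (x₀ := x₀) (by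
      have : (fun i : Fin r => g (c (Fin.castLE h i)) x₀) = f ∘ Fin.castLE h := by
        funext i; exact hc _
      rw [this]
      exact hli.comp _ (Fin.castLE_injective h))
  refine ⟨F, hF, fun x hx => ?_⟩
  have h1 := finrank_span_eq_card (hFx x hx)
  rw [Fintype.card_fin] at h1
  rw [← h1]
  refine Submodule.finrank_mono (Submodule.span_mono ?_)
  rintro _ ⟨i, rfl⟩
  exact ⟨_, rfl⟩

end Generic

/-! ### Dimension counts -/

section Dimension

variable {E : Type*} [AddCommGroup E] [Module ℂ E] [FiniteDimensional ℂ E]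

/-- A subspace of a power of `E` has at least the dimension of the slices it contains. -/
theorem sum_finrank_le_of_single_mem {n : ℕ} (R : Fin n → Submodule ℂ E)
    (S : Submodule ℂ (Fin n → E)) (h : ∀ l, ∀ x ∈ R l, Pi.single l x ∈ S) :
    ∑ l, Module.finrank ℂ (R l) ≤ Module.finrank ℂ S := by
  rw [← Module.finrank_pi_fintype]
  let f : (∀ l, R l) →ₗ[ℂ] (Fin n → E) :=
    LinearMap.pi fun l => (R l).subtype ∘ₗ LinearMap.proj l
  have hf : ∀ x, f x ∈ S := fun x => by
    rw [← Finset.univ_sum_single (f x)]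
    exact Submodule.sum_mem _ fun l _ => h l _ (x l).2
  refine LinearMap.finrank_le_finrank_of_injective (f := f.codRestrict S hf) ?_
  intro x y hxy
  funext l
  exact Subtype.ext (congrFun (congrArg Subtype.val hxy) l)

/-- General vectors from a spanning set enlarge a subspace as much as possible. -/
theorem exists_le_finrank_sup_span {P : Type*} (t : P → E)
    (ht : Submodule.span ℂ (Set.range t) = ⊤) (L : Submodule ℂ E) (r : ℕ)
    (hL : r ≤ Module.finrank ℂ L) (m : ℕ) (hm : r + m ≤ Module.finrank ℂ E) :
    ∃ x : Fin m → P,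
      r + m ≤ Module.finrank ℂ ↥(L ⊔ Submodule.span ℂ (Set.range (t ∘ x))) := by
  induction m with
  | zero => exact ⟨Fin.elim0, hL.trans (Submodule.finrank_mono le_sup_left)⟩
  | succ m ih =>
    obtain ⟨x, hx⟩ := ih (by omega)
    set L' := L ⊔ Submodule.span ℂ (Set.range (t ∘ x)) with hL'
    have hP : ∃ p, r + (m + 1) ≤ Module.finrank ℂ ↥(L' ⊔ Submodule.span ℂ {t p}) := by
      by_cases htop : L' = ⊤
      · have : Nonempty P := by
          by_contra hP
          rw [not_nonempty_iff] at hP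
          rw [Set.range_eq_empty, Submodule.span_empty] at ht
          have : Module.finrank ℂ E = 0 := by
            rw [← finrank_top, ← ht, finrank_bot]
          omega
        exact this.elim fun p => ⟨p, by rw [htop, top_sup_eq, finrank_top]; exact hm⟩
      · obtain ⟨p, hp⟩ : ∃ p, t p ∉ L' := by
          by_contra! hp
          exact htop (top_le_iff.1 (ht ▸ Submodule.span_le.2 (by rintro _ ⟨p, rfl⟩; exact hp p)))
        refine ⟨p, ?_⟩
        have hlt : L' < L' ⊔ Submodule.span ℂ {t p} :=
          lt_of_le_of_ne le_sup_left fun h => hp (h ▸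
            Submodule.mem_sup_right (Submodule.mem_span_singleton_self _))
        have := Submodule.finrank_lt_finrank_of_lt hlt
        omega
    obtain ⟨p, hp⟩ := hP
    refine ⟨Fin.snoc x p, hp.trans (Submodule.finrank_mono ?_)⟩
    refine sup_le (sup_le le_sup_left ?_) ?_
    · refine le_sup_of_le_right (Submodule.span_mono ?_)
      rintro _ ⟨i, rfl⟩
      exact ⟨i.castSucc, by simp⟩
    · refine le_sup_of_le_right (Submodule.span_mono ?_)
      rintro _ rfl
      exact ⟨Fin.last m, by simp⟩

theorem finrank_iSup_le_card_mul {ι : Type*} [Fintype ι] (T : ι → Submodule ℂ E) (d : ℕ)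
    (h : ∀ i, Module.finrank ℂ (T i) ≤ d) :
    Module.finrank ℂ ↥(⨆ i, T i) ≤ Fintype.card ι * d := by
  classical
  have : ∀ s : Finset ι, Module.finrank ℂ ↥(⨆ i ∈ s, T i) ≤ s.card * d := by
    intro s
    induction s using Finset.induction_on with
    | empty => simp
    | insert i s hi ih =>
      rw [Finset.iSup_insert, Finset.card_insert_of_notMem hi]
      have := Submodule.finrank_add_le_finrank_add_finrank (T i) (⨆ i ∈ s, T i)
      have := h i
      linarith
  have hu := this Finset.univ
  rwa [show (⨆ i ∈ Finset.univ, T i) = ⨆ i, T i by simp] at hu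

/-- Subspaces of dimension at most `d` which are independent, in the sense of having a sum of
maximal dimension, stay so after discarding some of them. -/
theorem card_mul_le_finrank_iSup_comp {ι κ : Type*} [Fintype ι] [Fintype κ]
    (T : ι → Submodule ℂ E) (d : ℕ) (h : ∀ i, Module.finrank ℂ (T i) ≤ d)
    (hT : Fintype.card ι * d ≤ Module.finrank ℂ ↥(⨆ i, T i)) (f : κ ↪ ι) :
    Fintype.card κ * d ≤ Module.finrank ℂ ↥(⨆ j, T (f j)) := by
  classical
  have h1 := finrank_iSup_le_card_mul (fun i : {i // i ∉ Set.range f} => T i) d fun i => h i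
  have h2 : (⨆ i, T i) ≤ (⨆ j, T (f j)) ⊔ ⨆ i : {i // i ∉ Set.range f}, T i := by
    refine iSup_le fun i => ?_
    by_cases hi : i ∈ Set.range f
    · obtain ⟨j, rfl⟩ := hi
      exact le_sup_of_le_left (le_iSup (fun j => T (f j)) j)
    · exact le_sup_of_le_right
        (le_iSup (fun i : {i // i ∉ Set.range f} => T i) ⟨i, hi⟩)
  have h3 := (Submodule.finrank_mono h2).trans
    (Submodule.finrank_add_le_finrank_add_finrank _ _)
  have h4 : Fintype.card {i // i ∉ Set.range f} + Fintype.card κ = Fintype.card ι := by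
    have h5 := Fintype.card_subtype_compl (fun i => i ∈ Set.range f)
    have h6 : Fintype.card {i // i ∈ Set.range f} = Fintype.card κ :=
      (Fintype.card_congr (Equiv.ofInjective f f.injective)).symm
    have h7 := Fintype.card_le_of_embedding f
    omega
  rw [← h4] at hT
  linarith

end Dimension

/-! ### Tangent spaces to the Segre variety -/

section Segre

variable {q : ℕ} {a : Fin q → ℕ}

instance : FiniteDimensional ℂ (Ten q a) :=
  (Basis.piTensorProduct fun j => Pi.basisFun ℂ (Fin (a j + 1))).finiteDimensional_of_finite

theorem finrank_ten (q : ℕ) (a : Fin q → ℕ) :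
    Module.finrank ℂ (Ten q a) = ∏ j, (a j + 1) := by
  rw [Module.finrank_eq_card_basis
    (Basis.piTensorProduct fun j => Pi.basisFun ℂ (Fin (a j + 1)))]
  simp

theorem tprod_eq_fromCoords (v : ∀ j : Fin q, Fin (a j + 1) → ℂ) :
    tprod ℂ v = fromCoords a fun f => ∏ j, v j (f j) := by
  have hv : v = fun j => ∑ y, v j y • (Pi.single y (1 : ℂ) : Fin (a j + 1) → ℂ) := by
    funext j
    exact pi_eq_sum_univ' (v j)
  conv_lhs => rw [hv, MultilinearMap.map_sum]
  exact Finset.sum_congr rfl fun f _ => MultilinearMap.map_smul_univ _ _ _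

theorem isPolyMap_tprod {σ : Type*} {V : (σ → ℂ) → ∀ j, Fin (a j + 1) → ℂ}
    (h : ∀ j y, ∃ P : MvPolynomial σ ℂ, ∀ x, V x j y = MvPolynomial.eval x P) :
    IsPolyMap fun x => (tprod ℂ (V x) : Ten q a) := by
  choose P hP using h
  have : (fun x => (tprod ℂ (V x) : Ten q a)) = fun x =>
      ∑ f : BIdx q a, MvPolynomial.eval x (∏ j, P j (f j)) • basisVec a f := by
    funext x
    rw [tprod_eq_fromCoords]
    simp [fromCoords, hP]
  rw [this]
  exact IsPolyMap.sum _ fun f _ => IsPolyMap.smul_const _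

theorem isPolyMap_tprod_update {κ : Type*} (i : κ) (j : Fin q) (u : Fin (a j + 1) → ℂ) :
    IsPolyMap fun x : (κ × Σ j : Fin q, Fin (a j + 1)) → ℂ =>
      (tprod ℂ (Function.update (fun j y => x (i, ⟨j, y⟩)) j u) : Ten q a) := by
  refine isPolyMap_tprod fun j' y => ?_
  by_cases hj : j' = j
  · subst hj
    exact ⟨MvPolynomial.C (u y), fun x => by simp⟩
  · exact ⟨MvPolynomial.X (i, ⟨j', y⟩), fun x => by simp [hj]⟩

theorem tprod_update_mem_tangent (v : ∀ j : Fin q, Fin (a j + 1) → ℂ) (j : Fin q)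
    (u : Fin (a j + 1) → ℂ) : tprod ℂ (Function.update v j u) ∈ tangent a v :=
  Submodule.subset_span ⟨j, u, rfl⟩

theorem iSup_tangent_eq_span {κ : Type*} (p : κ → ∀ j : Fin q, Fin (a j + 1) → ℂ) :
    ⨆ i, tangent a (p i) = Submodule.span ℂ (Set.range
      fun z : κ × Σ j : Fin q, (Fin (a j + 1) → ℂ) =>
        (tprod ℂ (Function.update (p z.1) z.2.1 z.2.2) : Ten q a)) := by
  apply le_antisymm
  · refine iSup_le fun i => Submodule.span_le.2 ?_
    rintro _ ⟨j, u, rfl⟩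
    exact Submodule.subset_span ⟨(i, ⟨j, u⟩), rfl⟩
  · refine Submodule.span_le.2 ?_
    rintro _ ⟨⟨i, j, u⟩, rfl⟩
    exact Submodule.mem_iSup_of_mem i (tprod_update_mem_tangent _ _ _)

theorem finrank_tangent_le (v : ∀ j : Fin q, Fin (a j + 1) → ℂ) :
    Module.finrank ℂ (tangent a v) ≤ 1 + ∑ j, a j := by
  by_cases hv : ∀ j, v j ≠ 0
  · choose y hy using fun j => Function.ne_iff.1 (hv j)
    let g : Option (Σ j : Fin q, Fin (a j)) → Ten q a := fun o =>
      o.elim (tprod ℂ v) fun z =>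
        tprod ℂ (Function.update v z.1 (Pi.single ((y z.1).succAbove z.2) 1))
    have hle : tangent a v ≤ Submodule.span ℂ (Set.range g) := by
      refine Submodule.span_le.2 ?_
      rintro _ ⟨j, u, rfl⟩
      let f : (Fin (a j + 1) → ℂ) →ₗ[ℂ] Ten q a := (PiTensorProduct.tprod ℂ).toLinearMap v j
      change f u ∈ Submodule.span ℂ (Set.range g)
      have hne : ∀ x, f (Pi.single ((y j).succAbove x) 1) ∈ Submodule.span ℂ (Set.range g) :=
        fun x => Submodule.subset_span ⟨some ⟨j, x⟩, rfl⟩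
      have hvj : f (v j) ∈ Submodule.span ℂ (Set.range g) :=
        Submodule.subset_span ⟨none, by simp [g, f]⟩
      have hexp : ∀ w : Fin (a j + 1) → ℂ, f w = w (y j) • f (Pi.single (y j) 1) +
          ∑ x, w ((y j).succAbove x) • f (Pi.single ((y j).succAbove x) 1) := fun w => by
        conv_lhs => rw [pi_eq_sum_univ' w, map_sum, Fin.sum_univ_succAbove _ (y j)]
        simp only [map_smul]
      have hy1 : f (Pi.single (y j) 1) ∈ Submodule.span ℂ (Set.range g) := by
        have h1 := hexp (v j)
        rw [← sub_eq_iff_eq_add] at h1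
        rw [← Submodule.smul_mem_iff _ (hy j), ← h1]
        exact Submodule.sub_mem _ hvj
          (Submodule.sum_mem _ fun x _ => Submodule.smul_mem _ _ (hne x))
      rw [hexp]
      exact Submodule.add_mem _ (Submodule.smul_mem _ _ hy1)
        (Submodule.sum_mem _ fun x _ => Submodule.smul_mem _ _ (hne x))
    refine (Submodule.finrank_mono hle).trans ((finrank_range_le_card g).trans ?_)
    simp [add_comm]
  · push Not at hv
    obtain ⟨j₀, hj₀⟩ := hv
    have hle : tangent a v ≤ LinearMap.range ((PiTensorProduct.tprod ℂ).toLinearMap v j₀) := by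
      refine Submodule.span_le.2 ?_
      rintro _ ⟨j, u, rfl⟩
      by_cases hj : j = j₀
      · subst hj
        exact ⟨u, rfl⟩
      · have h0 : tprod ℂ (Function.update v j u) = 0 :=
          MultilinearMap.map_coord_zero _ j₀ (by rw [Function.update_of_ne (Ne.symm hj), hj₀])
        rw [h0]
        exact Submodule.zero_mem _
    refine (Submodule.finrank_mono hle).trans ((LinearMap.finrank_range_le _).trans ?_)
    rw [Module.finrank_fin_fun, add_comm]
    exact Nat.add_le_add_left (Finset.single_le_sum (fun _ _ => Nat.zero_le _)
      (Finset.mem_univ j₀)) 1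

/-- Some `k` tangent spaces to the Segre variety are independent. -/
def Nondefective (q : ℕ) (a : Fin q → ℕ) (k : ℕ) : Prop :=
  ∃ p : Fin k → ∀ j : Fin q, Fin (a j + 1) → ℂ,
    k * (1 + ∑ j, a j) ≤ Module.finrank ℂ ↥(⨆ i, tangent a (p i))

theorem Nondefective.exists_of_card_le {k : ℕ} (h : Nondefective q a k) (κ : Type*) [Fintype κ]
    (hκ : Fintype.card κ ≤ k) : ∃ p : κ → ∀ j : Fin q, Fin (a j + 1) → ℂ,
      Fintype.card κ * (1 + ∑ j, a j) ≤ Module.finrank ℂ ↥(⨆ i, tangent a (p i)) := by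
  obtain ⟨p, hp⟩ := h
  obtain ⟨f⟩ := Function.Embedding.nonempty_of_card_le (α := κ) (β := Fin k) (by simpa using hκ)
  exact ⟨fun i => p (f i), card_mul_le_finrank_iSup_comp (fun i => tangent a (p i)) _
    (fun i => finrank_tangent_le _) (by simpa using hp) f⟩

theorem Nondefective.generically {k : ℕ} (h : Nondefective q a k) :
    ∃ F : MvPolynomial (WIdx q a k) ℂ, (∃ p, evalW F p ≠ 0) ∧
      ∀ p : Fin k → ∀ j : Fin q, Fin (a j + 1) → ℂ, evalW F p ≠ 0 →
        Module.finrank ℂ ↥(⨆ i, tangent a (p i)) = k * (1 + ∑ j, a j) := by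
  obtain ⟨p, hp⟩ := h
  rw [iSup_tangent_eq_span] at hp
  obtain ⟨F, ⟨x, hx⟩, hF⟩ := generically_le_finrank_span
    (g := fun (z : Fin k × Σ j : Fin q, (Fin (a j + 1) → ℂ)) (x : WIdx q a k → ℂ) =>
      (tprod ℂ (Function.update (fun j y => x (z.1, ⟨j, y⟩)) z.2.1 z.2.2) : Ten q a))
    (fun z => isPolyMap_tprod_update z.1 z.2.1 z.2.2)
    (x₀ := fun x => p x.1 x.2.1 x.2.2) hp
  refine ⟨F, ⟨fun i j y => x (i, ⟨j, y⟩), hx⟩, fun p' hp' => le_antisymm ?_ ?_⟩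
  · simpa using finrank_iSup_le_card_mul (fun i => tangent a (p' i)) _
      fun i => finrank_tangent_le _
  · rw [iSup_tangent_eq_span]
    exact hF (fun x => p' x.1 x.2.1 x.2.2) hp'

end Segre

/-! ### Splitting off the last factor -/

section Slices

variable {q : ℕ} (a : Fin (q + 1) → ℕ)

/-- The slices of a tensor along its last factor. -/
def sliceMap :
    Ten (q + 1) a →ₗ[ℂ] Fin (a (Fin.last q) + 1) → Ten q (fun j => a j.castSucc) :=
  PiTensorProduct.lift (MultilinearMap.uncurryRight
    ((LinearMap.mk₂ ℂ (fun (x : Ten q (fun j => a j.castSucc))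
        (z : Fin (a (Fin.last q) + 1) → ℂ) l => z l • x)
      (fun _ _ _ => funext fun _ => smul_add _ _ _)
      (fun _ _ _ => funext fun _ => smul_comm _ _ _)
      (fun _ _ _ => funext fun _ => add_smul _ _ _)
      (fun _ _ _ => funext fun _ => mul_smul _ _ _)).compMultilinearMap
        (PiTensorProduct.tprod ℂ)))

theorem sliceMap_tprod (v : ∀ j, Fin (a j + 1) → ℂ) (l : Fin (a (Fin.last q) + 1)) :
    sliceMap a (tprod ℂ v) l = v (Fin.last q) l •
      PiTensorProduct.tprod ℂ (fun j : Fin q => v j.castSucc) := by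
  rw [sliceMap, PiTensorProduct.lift.tprod]
  rfl

variable {a}

/-- Append a last factor to a tuple of factor vectors. -/
def appendFactor (v : ∀ j : Fin q, Fin (a j.castSucc + 1) → ℂ)
    (z : Fin (a (Fin.last q) + 1) → ℂ) : ∀ j, Fin (a j + 1) → ℂ :=
  Fin.snoc (α := fun j => Fin (a j + 1) → ℂ) v z

theorem sliceMap_tprod_appendFactor (v : ∀ j : Fin q, Fin (a j.castSucc + 1) → ℂ)
    (m : Fin (a (Fin.last q) + 1)) :
    sliceMap a (tprod ℂ (appendFactor v (Pi.single m 1))) = Pi.single m (tprod ℂ v) := by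
  funext l
  rw [sliceMap_tprod]
  rcases eq_or_ne l m with rfl | h <;> simp [appendFactor, *]

theorem update_appendFactor_castSucc (v : ∀ j : Fin q, Fin (a j.castSucc + 1) → ℂ)
    (z : Fin (a (Fin.last q) + 1) → ℂ) (j : Fin q) (u : Fin (a j.castSucc + 1) → ℂ) :
    Function.update (appendFactor v z) j.castSucc u = appendFactor (Function.update v j u) z :=
  (Fin.snoc_update (α := fun j => Fin (a j + 1) → ℂ) z v j u).symm

theorem update_appendFactor_last (v : ∀ j : Fin q, Fin (a j.castSucc + 1) → ℂ)
    (z u : Fin (a (Fin.last q) + 1) → ℂ) :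
    Function.update (appendFactor v z) (Fin.last q) u = appendFactor v u :=
  Fin.update_snoc_last (α := fun j => Fin (a j + 1) → ℂ) z v u

/-- At points whose last factor is a coordinate vector, the tangent spaces split into slices:
the tangent space in one slice and the point itself in all the others. -/
theorem sum_finrank_slices_le {k : ℕ} (c : Fin k → Fin (a (Fin.last q) + 1))
    (p : Fin k → ∀ j : Fin q, Fin (a j.castSucc + 1) → ℂ) :
    ∑ m, Module.finrank ℂ ↥((⨆ i : {i // c i = m}, tangent (fun j => a j.castSucc) (p i)) ⊔
      Submodule.span ℂ (Set.range fun i => (tprod ℂ (p i) : Ten q (fun j => a j.castSucc)))) ≤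
    Module.finrank ℂ ↥(⨆ i, tangent a (appendFactor (p i) (Pi.single (c i) 1))) := by
  refine (sum_finrank_le_of_single_mem _ ((⨆ i, tangent a
    (appendFactor (p i) (Pi.single (c i) 1))).map (sliceMap a)) ?_).trans
      (Submodule.finrank_map_le _ _)
  intro m x hx
  suffices hle : _ ≤ Submodule.comap
      (LinearMap.single ℂ (fun _ => Ten q (fun j => a j.castSucc)) m)
      ((⨆ i, tangent a (appendFactor (p i) (Pi.single (c i) 1))).map (sliceMap a)) from hle hx
  refine sup_le (iSup_le ?_) ?_
  · rintro ⟨i, hi⟩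
    refine Submodule.span_le.2 ?_
    rintro _ ⟨j, u, rfl⟩
    refine ⟨_, Submodule.mem_iSup_of_mem i (tprod_update_mem_tangent _ j.castSucc u), ?_⟩
    rw [update_appendFactor_castSucc, sliceMap_tprod_appendFactor, hi]
    rfl
  · refine Submodule.span_le.2 ?_
    rintro _ ⟨i, rfl⟩
    refine ⟨_, Submodule.mem_iSup_of_mem i
      (tprod_update_mem_tangent _ (Fin.last q) (Pi.single m 1)), ?_⟩
    rw [update_appendFactor_last, sliceMap_tprod_appendFactor]
    rfl

/-- Tangent spaces at some of `k` general points, together with the remaining points, are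
independent if the dimension permits and there are not too many tangent spaces. -/
theorem Nondefective.generically_sup_span {q : ℕ} {a : Fin q → ℕ} {s k : ℕ}
    (h : Nondefective q a s) (Q : Fin k → Prop) [DecidablePred Q]
    (hQ : Fintype.card {i // Q i} ≤ s) (hdim : s * ∑ j, a j + k ≤ ∏ j, (a j + 1)) :
    Generically fun x : WIdx q a k → ℂ => Fintype.card {i // Q i} * ∑ j, a j + k ≤
      Module.finrank ℂ ↥((⨆ i : {i // Q i}, tangent a fun j y => x (i, ⟨j, y⟩)) ⊔
        Submodule.span ℂ (Set.range fun i : Fin k =>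
          (tprod ℂ (fun j y => x (i, ⟨j, y⟩)) : Ten q a))) := by
  obtain ⟨p₀, hp₀⟩ := h.exists_of_card_le {i // Q i} hQ
  have hcard : Fintype.card {i // Q i} + Fintype.card {i // ¬ Q i} = k := by
    have h1 := Fintype.card_subtype_compl Q
    have h2 := Fintype.card_subtype_le Q
    rw [Fintype.card_fin] at h1 h2
    omega
  have htotal : Fintype.card {i // Q i} * (1 + ∑ j, a j) + Fintype.card {i // ¬ Q i} =
      Fintype.card {i // Q i} * ∑ j, a j + k := by
    linarith
  obtain ⟨y, hy⟩ := exists_le_finrank_sup_span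
    (fun v : ∀ j : Fin q, Fin (a j + 1) → ℂ => (tprod ℂ v : Ten q a))
    PiTensorProduct.span_tprod_eq_top _ _ hp₀ (Fintype.card {i // ¬ Q i}) (by
      rw [htotal, finrank_ten]
      exact (Nat.add_le_add_right (Nat.mul_le_mul_right _ hQ) k).trans hdim)
  rw [htotal] at hy
  let p : Fin k → ∀ j : Fin q, Fin (a j + 1) → ℂ := fun i =>
    if hi : Q i then p₀ ⟨i, hi⟩ else y (Fintype.equivFin _ ⟨i, hi⟩)
  let g : ({i // Q i} × Σ j : Fin q, (Fin (a j + 1) → ℂ)) ⊕ Fin k → (WIdx q a k → ℂ) → Ten q a :=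
    Sum.elim (fun z x => tprod ℂ (Function.update (fun j y => x (z.1, ⟨j, y⟩)) z.2.1 z.2.2))
      fun i x => tprod ℂ fun j y => x (i, ⟨j, y⟩)
  have hg : ∀ z, IsPolyMap (g z) := by
    rintro (⟨i, j, u⟩ | i)
    · exact isPolyMap_tprod_update (i : Fin k) j u
    · exact isPolyMap_tprod fun j y => ⟨MvPolynomial.X (i, ⟨j, y⟩), fun x => by simp⟩
  have hspan : ∀ x : WIdx q a k → ℂ, Submodule.span ℂ (Set.range fun z => g z x) =
      (⨆ i : {i // Q i}, tangent a fun j y => x (i, ⟨j, y⟩)) ⊔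
        Submodule.span ℂ (Set.range fun i : Fin k =>
          (tprod ℂ (fun j y => x (i, ⟨j, y⟩)) : Ten q a)) := fun x => by
    rw [iSup_tangent_eq_span, ← Submodule.span_union, ← Set.Sum.elim_range]
    congr 2
    funext z
    cases z <;> rfl
  suffices hle : _ from (generically_le_finrank_span hg (x₀ := fun x => p x.1 x.2.1 x.2.2)
    (hy.trans (Submodule.finrank_mono hle))).imp fun F hF =>
      ⟨hF.1, fun x hx => by beta_reduce; rw [← hspan]; exact hF.2 x hx⟩
  rw [hspan]
  refine sup_le_sup (iSup_mono fun i => ?_) (Submodule.span_mono ?_)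
  · change _ ≤ tangent a (p i)
    rw [show p i = p₀ i from dif_pos i.2]
  · rintro _ ⟨i, rfl⟩
    refine ⟨(Fintype.equivFin {i // ¬ Q i}).symm i, ?_⟩
    change tprod ℂ (p _) = tprod ℂ (y i)
    rw [show p ((Fintype.equivFin {i // ¬ Q i}).symm i) = y i from
      (dif_neg ((Fintype.equivFin {i // ¬ Q i}).symm i).2).trans (by simp)]

theorem Nondefective.succ {s k : ℕ} (h : Nondefective q (fun j => a j.castSucc) s)
    (hk : k ≤ (a (Fin.last q) + 1) * s)
    (hdim : s * ∑ j : Fin q, a j.castSucc + k ≤ ∏ j : Fin q, (a j.castSucc + 1)) :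
    Nondefective (q + 1) a k := by
  obtain ⟨f⟩ := Function.Embedding.nonempty_of_card_le
    (α := Fin k) (β := Fin (a (Fin.last q) + 1) × Fin s) (by simpa using hk)
  let c : Fin k → Fin (a (Fin.last q) + 1) := fun i => (f i).1
  have hc : ∀ m, Fintype.card {i // c i = m} ≤ s := fun m => by
    have := Fintype.card_le_of_injective (fun i : {i // c i = m} => (f i).2) fun i i' hii =>
      Subtype.ext (f.injective (Prod.ext (i.2.trans i'.2.symm) hii))
    simpa using this
  obtain ⟨x, hx⟩ := (Generically.forall fun m =>
    h.generically_sup_span (fun i => c i = m) (hc m) hdim).exists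
  have hle := (Finset.sum_le_sum fun m _ => hx m).trans
    (sum_finrank_slices_le c fun i j y => x (i, ⟨j, y⟩))
  refine ⟨fun i => appendFactor (fun j y => x (i, ⟨j, y⟩)) (Pi.single (c i) 1),
    le_trans ?_ hle⟩
  have hsum : ∑ m, Fintype.card {i // c i = m} = k := by
    rw [← Fintype.card_sigma, Fintype.card_congr (Equiv.sigmaFiberEquiv c), Fintype.card_fin]
  rw [Finset.sum_add_distrib, ← Finset.sum_mul, hsum, Fin.sum_univ_castSucc]
  simp only [Finset.sum_const, Finset.card_univ, Fintype.card_fin, smul_eq_mul]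
  exact le_of_eq (by ring)

end Slices

/-! ### Three factors -/

section ThreeFactors

/-- The rank one matrix with the given column and row. -/
def outer {α β : Type*} (v : α → ℂ) (w : β → ℂ) : α → β → ℂ := fun x y => v x * w y

/-- A dependent triple. -/
def triple {F : Fin 3 → Type*} (x : F 0) (y : F 1) (z : F 2) : ∀ j, F j
  | 0 => x
  | 1 => y
  | 2 => z

/-- A tensor with three factors as a sequence of matrices. -/
def matrixSlices (a : Fin 3 → ℕ) :
    Ten 3 a →ₗ[ℂ] Fin (a 2 + 1) → Fin (a 0 + 1) → Fin (a 1 + 1) → ℂ :=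
  PiTensorProduct.lift (MultilinearMap.pi fun l => MultilinearMap.pi fun x =>
    MultilinearMap.pi fun y => (MultilinearMap.mkPiAlgebra ℂ (Fin 3) ℂ).compLinearMap
      fun j => LinearMap.proj (triple (F := fun j => Fin (a j + 1)) x y l j))

variable {a : Fin 3 → ℕ}

theorem matrixSlices_triple (v : Fin (a 0 + 1) → ℂ) (w : Fin (a 1 + 1) → ℂ)
    (z : Fin (a 2 + 1) → ℂ) :
    matrixSlices a (tprod ℂ (triple (F := fun j => Fin (a j + 1) → ℂ) v w z)) =
      fun l => z l • outer v w := by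
  funext l x y
  simp only [matrixSlices, PiTensorProduct.lift.tprod, MultilinearMap.pi_apply,
    MultilinearMap.compLinearMap_apply, MultilinearMap.mkPiAlgebra_apply, Fin.prod_univ_three]
  change v x * w y * z l = z l * (v x * w y)
  ring

theorem update_triple_zero {F : Fin 3 → Type*} (x x' : F 0) (y : F 1) (z : F 2) :
    Function.update (triple x y z) 0 x' = triple x' y z := by
  funext j; fin_cases j <;> rfl

theorem update_triple_one {F : Fin 3 → Type*} (x : F 0) (y y' : F 1) (z : F 2) :
    Function.update (triple x y z) 1 y' = triple x y' z := by
  funext j; fin_cases j <;> rfl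

theorem update_triple_two {F : Fin 3 → Type*} (x : F 0) (y : F 1) (z z' : F 2) :
    Function.update (triple x y z) 2 z' = triple x y z' := by
  funext j; fin_cases j <;> rfl

variable {α β M ι : Type*}

/-- Generators of the limit, in the slice `l`, of the span of the tangent spaces at points
`v m i ⊗ w m i ⊗ z` when `z` tends to the `m`-th coordinate vector along the coordinate direction
following `m`; here `l'` is the index preceding `l`. -/
def limitGen (v : M → ι → α → ℂ) (w : M → ι → β → ℂ) (l l' : M) :
    (ι × (α → ℂ)) ⊕ (ι × (β → ℂ)) ⊕ (ι × ι) ⊕ (M × ι) → α → β → ℂ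
  | .inl (i, u) => outer u (w l i)
  | .inr (.inl (i, u)) => outer (v l i) u
  | .inr (.inr (.inl (i, j))) => outer (v l' i) (w l' j)
  | .inr (.inr (.inr (m, i))) => outer (v m i) (w m i)

theorem isPolyMap_outer {σ : Type*} [Finite α] [Finite β] {V : (σ → ℂ) → α → ℂ}
    {W : (σ → ℂ) → β → ℂ} (hV : ∀ y, ∃ P : MvPolynomial σ ℂ, ∀ x, V x y = MvPolynomial.eval x P)
    (hW : ∀ y, ∃ P : MvPolynomial σ ℂ, ∀ x, W x y = MvPolynomial.eval x P) :
    IsPolyMap fun x => outer (V x) (W x) := by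
  refine isPolyMap_pi fun y => isPolyMap_pi fun y' => ?_
  obtain ⟨P, hP⟩ := hV y
  obtain ⟨Q, hQ⟩ := hW y'
  exact isPolyMap_scalar (P * Q) fun x => by simp [outer, hP, hQ]

theorem isPolyMap_limitGen [Finite α] [Finite β] (l l' : M)
    (z : (ι × (α → ℂ)) ⊕ (ι × (β → ℂ)) ⊕ (ι × ι) ⊕ (M × ι)) :
    IsPolyMap fun x : (M × ι × (α ⊕ β)) → ℂ =>
      limitGen (fun m i y => x (m, i, .inl y)) (fun m i y => x (m, i, .inr y)) l l' z := by
  have hc : ∀ c : ℂ, ∃ P : MvPolynomial (M × ι × (α ⊕ β)) ℂ, ∀ x, c = MvPolynomial.eval x P :=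
    fun c => ⟨MvPolynomial.C c, fun x => by simp⟩
  have hx : ∀ y, ∃ P : MvPolynomial (M × ι × (α ⊕ β)) ℂ, ∀ x, x y = MvPolynomial.eval x P :=
    fun y => ⟨MvPolynomial.X y, fun x => by simp⟩
  rcases z with ⟨i, u⟩ | ⟨i, u⟩ | ⟨i, j⟩ | ⟨m, i⟩ <;>
    exact isPolyMap_outer (fun _ => by first | exact hx _ | exact hc _)
      (fun _ => by first | exact hx _ | exact hc _)

theorem card_le_finrank_of_outer_single_mem [Fintype α] [Fintype β] [DecidableEq α]
    [DecidableEq β] (S : Submodule ℂ (α → β → ℂ)) (U : Finset (α × β))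
    (h : ∀ z ∈ U, outer (Pi.single z.1 1) (Pi.single z.2 1) ∈ S) :
    U.card ≤ Module.finrank ℂ S := by
  have hli : LinearIndependent ℂ fun z : U =>
      (outer (Pi.single z.1.1 1) (Pi.single z.1.2 1) : α → β → ℂ) := by
    rw [Fintype.linearIndependent_iff]
    intro g hg z
    have h1 := congrFun (congrFun hg z.1.1) z.1.2
    simp only [Finset.sum_apply, Pi.smul_apply, outer, smul_eq_mul, Pi.zero_apply] at h1
    rw [Finset.sum_eq_single z (fun z' _ hz' => ?_) (fun hz => absurd (Finset.mem_univ z) hz)] at h1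
    · simpa using h1
    · by_cases h2 : z.1.1 = z'.1.1
      · have h3 : z.1.2 ≠ z'.1.2 := fun h3 => hz' (Subtype.ext (Prod.ext h2.symm h3.symm))
        simp [Pi.single_apply, h3]
      · simp [Pi.single_apply, h2]
  have h1 := finrank_span_eq_card hli
  rw [Fintype.card_coe] at h1
  rw [← h1]
  refine Submodule.finrank_mono (Submodule.span_le.2 ?_)
  rintro _ ⟨z, rfl⟩
  exact h z.1 z.2

theorem exists_le_finrank_limitGen [Fintype α] [Fintype β] [Fintype M] [Fintype ι]
    (l l' : M) (hl : l' ≠ l)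
    (hα : 2 * Fintype.card ι ≤ Fintype.card α) (hβ : 2 * Fintype.card ι ≤ Fintype.card β)
    (hdim : Fintype.card ι * (Fintype.card α + Fintype.card β + (Fintype.card M - 2)) ≤
      Fintype.card α * Fintype.card β) :
    ∃ (v : M → ι → α → ℂ) (w : M → ι → β → ℂ),
      Fintype.card ι * (Fintype.card α + Fintype.card β + (Fintype.card M - 2)) ≤
        Module.finrank ℂ (Submodule.span ℂ (Set.range (limitGen v w l l'))) := by
  classical
  obtain ⟨e⟩ := Function.Embedding.nonempty_of_card_le (α := ι ⊕ ι) (β := α) (by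
    rw [Fintype.card_sum]; omega)
  obtain ⟨f⟩ := Function.Embedding.nonempty_of_card_le (α := ι ⊕ ι) (β := β) (by
    rw [Fintype.card_sum]; omega)
  let X₁ : Finset α := Finset.univ.map (Function.Embedding.inl.trans e)
  let X₂ : Finset α := Finset.univ.map (Function.Embedding.inr.trans e)
  let Y₁ : Finset β := Finset.univ.map (Function.Embedding.inl.trans f)
  let Y₂ : Finset β := Finset.univ.map (Function.Embedding.inr.trans f)
  have hX : Disjoint X₁ X₂ := by
    rw [Finset.disjoint_left]
    intro x h1 h2
    simp only [X₁, X₂, Finset.mem_map, Finset.mem_univ, true_and] at h1 h2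
    obtain ⟨i, rfl⟩ := h1
    obtain ⟨j, hj⟩ := h2
    exact Sum.inr_ne_inl (e.injective hj)
  have hY : Disjoint Y₁ Y₂ := by
    rw [Finset.disjoint_left]
    intro x h1 h2
    simp only [Y₁, Y₂, Finset.mem_map, Finset.mem_univ, true_and] at h1 h2
    obtain ⟨i, rfl⟩ := h1
    obtain ⟨j, hj⟩ := h2
    exact Sum.inr_ne_inl (f.injective hj)
  let U₀ : Finset (α × β) := (X₁ ×ˢ Finset.univ ∪ X₁ᶜ ×ˢ Y₁) ∪ X₂ ×ˢ Y₂
  have hU₀ : U₀.card = Fintype.card ι * (Fintype.card α + Fintype.card β) := by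
    rw [Finset.card_union_of_disjoint, Finset.card_union_of_disjoint]
    · simp only [Finset.card_product, Finset.card_compl, X₁, X₂, Y₁, Y₂, Finset.card_map,
        Finset.card_univ]
      obtain ⟨c, hc⟩ := Nat.exists_eq_add_of_le (show Fintype.card ι ≤ Fintype.card α by omega)
      rw [hc, Nat.add_sub_cancel_left]
      ring
    · exact Finset.disjoint_product.2 (Or.inl disjoint_compl_right)
    · rw [Finset.disjoint_union_left]
      exact ⟨Finset.disjoint_product.2 (Or.inl hX), Finset.disjoint_product.2 (Or.inr hY)⟩
  have hM : Fintype.card {m // m ∉ ({l, l'} : Finset M)} = Fintype.card M - 2 := by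
    rw [Fintype.card_subtype_compl, Fintype.card_coe, Finset.card_pair hl.symm]
  obtain ⟨h⟩ := Function.Embedding.nonempty_of_card_le
    (α := {m // m ∉ ({l, l'} : Finset M)} × ι) (β := {z // z ∉ U₀}) (by
      rw [Fintype.card_prod, hM, Fintype.card_subtype_compl, Fintype.card_coe, hU₀,
        Fintype.card_prod]
      refine Nat.le_sub_of_add_le (le_trans (le_of_eq ?_) hdim)
      ring)
  let pt : M → ι → α × β := fun m i =>
    if m = l then (e (.inl i), f (.inl i)) else if m = l' then (e (.inr i), f (.inr i)) else
      if hm : m ∉ ({l, l'} : Finset M) then h (⟨m, hm⟩, i) else (e (.inl i), f (.inl i))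
  have hpl : ∀ i, pt l i = (e (.inl i), f (.inl i)) := fun i => if_pos rfl
  have hpl' : ∀ i, pt l' i = (e (.inr i), f (.inr i)) := fun i => by simp [pt, hl]
  have hpm : ∀ m i, pt m.1 i = (h (m, i)).1 := fun m i => by
    have hm := m.2
    simp only [Finset.mem_insert, Finset.mem_singleton, not_or] at hm
    simp [pt, hm.1, hm.2]
  refine ⟨fun m i => Pi.single (pt m i).1 1, fun m i => Pi.single (pt m i).2 1, ?_⟩
  let U : Finset (α × β) := U₀ ∪ Finset.univ.map (h.trans (Function.Embedding.subtype _))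
  have hU : U.card = Fintype.card ι * (Fintype.card α + Fintype.card β + (Fintype.card M - 2)) := by
    rw [Finset.card_union_of_disjoint, hU₀, Finset.card_map, Finset.card_univ,
      Fintype.card_prod, hM]
    · ring
    · rw [Finset.disjoint_right]
      intro z hz
      obtain ⟨y, -, rfl⟩ := Finset.mem_map.1 hz
      exact (h y).2
  rw [← hU]
  refine card_le_finrank_of_outer_single_mem _ _ fun z hz => ?_
  rw [Finset.mem_union, Finset.mem_union, Finset.mem_union] at hz
  rcases hz with ((hz | hz) | hz) | hz
  · obtain ⟨i, -, hi⟩ := Finset.mem_map.1 (Finset.mem_product.1 hz).1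
    refine Submodule.subset_span ⟨.inr (.inl (i, Pi.single z.2 1)), ?_⟩
    simp only [limitGen, hpl]
    rw [← hi]
    rfl
  · obtain ⟨i, -, hi⟩ := Finset.mem_map.1 (Finset.mem_product.1 hz).2
    refine Submodule.subset_span ⟨.inl (i, Pi.single z.1 1), ?_⟩
    simp only [limitGen, hpl]
    rw [← hi]
    rfl
  · obtain ⟨i, -, hi⟩ := Finset.mem_map.1 (Finset.mem_product.1 hz).1
    obtain ⟨j, -, hj⟩ := Finset.mem_map.1 (Finset.mem_product.1 hz).2
    refine Submodule.subset_span ⟨.inr (.inr (.inl (i, j))), ?_⟩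
    simp only [limitGen, hpl']
    rw [← hi, ← hj]
    rfl
  · obtain ⟨⟨m, i⟩, -, rfl⟩ := Finset.mem_map.1 hz
    refine Submodule.subset_span ⟨.inr (.inr (.inr (m, i))), ?_⟩
    simp only [limitGen, hpm]
    rfl

/-- Generators of a subspace of the span of the tangent spaces at the points
`v m i ⊗ w m i ⊗ (e_m + ε t_i e_{m+1})`, depending polynomially on `ε`. -/
def degenerationGen {n s : ℕ} (v : Fin (n + 1) → Fin s → α → ℂ)
    (w : Fin (n + 1) → Fin s → β → ℂ) (z : ℂ → Fin (n + 1) → Fin s → Fin (n + 1) → ℂ) :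
    (Fin (n + 1) × Fin s × (α → ℂ)) ⊕ (Fin (n + 1) × Fin s × (β → ℂ)) ⊕
      (Fin (n + 1) × Fin s × Fin s) ⊕ (Fin (n + 1) × Fin (n + 1) × Fin s) →
      (Unit → ℂ) → Fin (n + 1) → α → β → ℂ
  | .inl (m, i, u), ε => fun l => z (ε ()) m i l • outer u (w m i)
  | .inr (.inl (m, i, u)), ε => fun l => z (ε ()) m i l • outer (v m i) u
  | .inr (.inr (.inl (m, i, j))), _ =>
      fun l => (Pi.single (m + 1) 1 : Fin (n + 1) → ℂ) l • outer (v m i) (w m j)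
  | .inr (.inr (.inr (c, m, i))), _ =>
      fun l => (Pi.single c 1 : Fin (n + 1) → ℂ) l • outer (v m i) (w m i)

theorem single_smul_eq {M E : Type*} [DecidableEq M] [AddCommGroup E] [Module ℂ E]
    (m : M) (e : E) : (fun l => (Pi.single m 1 : M → ℂ) l • e) = Pi.single m e := by
  funext l
  rcases eq_or_ne l m with rfl | h <;> simp [*]

/-- Degenerating the third factors of the points to coordinate vectors bounds the dimension of
the span of the tangent spaces from below. -/
theorem exists_sum_finrank_limitGen_le {s : ℕ} (v : Fin (a 2 + 1) → Fin s → Fin (a 0 + 1) → ℂ)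
    (w : Fin (a 2 + 1) → Fin s → Fin (a 1 + 1) → ℂ) :
    ∃ p : Fin (a 2 + 1) × Fin s → ∀ j, Fin (a j + 1) → ℂ,
      ∑ l, Module.finrank ℂ (Submodule.span ℂ (Set.range (limitGen v w l (l - 1)))) ≤
        Module.finrank ℂ ↥(⨆ i, tangent a (p i)) := by
  let z : ℂ → Fin (a 2 + 1) → Fin s → Fin (a 2 + 1) → ℂ := fun ε m i =>
    Pi.single m 1 + (ε * (i : ℕ)) • Pi.single (m + 1) 1
  have hpoly : ∀ c, IsPolyMap (degenerationGen v w z c) := by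
    have hz : ∀ m i l (y : ℂ), IsPolyMap fun ε : Unit → ℂ => z (ε ()) m i l • y := by
      intro m i l y
      refine isPolyMap_scalar ((MvPolynomial.C ((Pi.single m 1 : Fin (a 2 + 1) → ℂ) l) +
        MvPolynomial.X () * MvPolynomial.C ((i : ℕ) : ℂ) *
          MvPolynomial.C ((Pi.single (m + 1) 1 : Fin (a 2 + 1) → ℂ) l)) *
            MvPolynomial.C y) fun ε => ?_
      simp only [z, Pi.add_apply, Pi.smul_apply, smul_eq_mul, map_add, map_mul,
        MvPolynomial.eval_C, MvPolynomial.eval_X]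
    have hc : ∀ y : ℂ, IsPolyMap fun _ : Unit → ℂ => y := fun y =>
      isPolyMap_scalar (MvPolynomial.C y) fun _ => by simp
    rintro (⟨m, i, u⟩ | ⟨m, i, u⟩ | ⟨m, i, j⟩ | ⟨c, m, i⟩) <;>
      refine isPolyMap_pi fun l => isPolyMap_pi fun x => isPolyMap_pi fun y => ?_
    · exact hz m i l _
    · exact hz m i l _
    · exact hc _
    · exact hc _
  have hz0 : ∀ m i, z 0 m i = Pi.single m 1 := fun m i => by simp [z]
  have hlim : ∑ l, Module.finrank ℂ (Submodule.span ℂ (Set.range (limitGen v w l (l - 1)))) ≤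
      Module.finrank ℂ (Submodule.span ℂ (Set.range fun c => degenerationGen v w z c 0)) := by
    refine sum_finrank_le_of_single_mem _ _ fun l x hx => ?_
    suffices hle : Submodule.span ℂ (Set.range (limitGen v w l (l - 1))) ≤ Submodule.comap
      (LinearMap.single ℂ (fun _ => Fin (a 0 + 1) → Fin (a 1 + 1) → ℂ) l)
      (Submodule.span ℂ (Set.range fun c => degenerationGen v w z c 0)) from hle hx
    refine Submodule.span_le.2 ?_
    rintro _ ⟨⟨i, u⟩ | ⟨i, u⟩ | ⟨i, j⟩ | ⟨m, i⟩, rfl⟩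
    · refine Submodule.subset_span ⟨.inl (l, i, u), ?_⟩
      simp only [degenerationGen, limitGen, Pi.zero_apply, hz0, single_smul_eq]
      rfl
    · refine Submodule.subset_span ⟨.inr (.inl (l, i, u)), ?_⟩
      simp only [degenerationGen, limitGen, Pi.zero_apply, hz0, single_smul_eq]
      rfl
    · refine Submodule.subset_span ⟨.inr (.inr (.inl (l - 1, i, j))), ?_⟩
      simp only [degenerationGen, limitGen, single_smul_eq, sub_add_cancel]
      rfl
    · refine Submodule.subset_span ⟨.inr (.inr (.inr (l, m, i))), ?_⟩
      simp only [degenerationGen, limitGen, single_smul_eq]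
      rfl
  have hne : Generically fun ε : Unit → ℂ => ε () ≠ 0 :=
    ⟨MvPolynomial.X (), ⟨1, by simp⟩, fun ε hε => by simpa using hε⟩
  obtain ⟨ε, hε, hε0⟩ := ((generically_le_finrank_span hpoly hlim).and hne).exists
  let p : Fin (a 2 + 1) × Fin s → ∀ j, Fin (a j + 1) → ℂ := fun c =>
    triple (F := fun j => Fin (a j + 1) → ℂ) (v c.1 c.2) (w c.1 c.2) (z (ε ()) c.1 c.2)
  refine ⟨p, hε.trans (le_trans (Submodule.finrank_mono ?_)
    (Submodule.finrank_map_le (matrixSlices a) _))⟩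
  have h0 : ∀ m i u, (fun l => z (ε ()) m i l • outer u (w m i)) ∈
      (⨆ c, tangent a (p c)).map (matrixSlices a) := fun m i u =>
    ⟨_, Submodule.mem_iSup_of_mem (m, i) (tprod_update_mem_tangent _ 0 u), by
      rw [update_triple_zero, matrixSlices_triple]⟩
  have h1 : ∀ m i u, (fun l => z (ε ()) m i l • outer (v m i) u) ∈
      (⨆ c, tangent a (p c)).map (matrixSlices a) := fun m i u =>
    ⟨_, Submodule.mem_iSup_of_mem (m, i) (tprod_update_mem_tangent _ 1 u), by
      rw [update_triple_one, matrixSlices_triple]⟩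
  have h2 : ∀ m i (u : Fin (a 2 + 1) → ℂ), (fun l => u l • outer (v m i) (w m i)) ∈
      (⨆ c, tangent a (p c)).map (matrixSlices a) := fun m i u =>
    ⟨_, Submodule.mem_iSup_of_mem (m, i) (tprod_update_mem_tangent _ 2 u), by
      rw [update_triple_two, matrixSlices_triple]⟩
  refine Submodule.span_le.2 ?_
  rintro _ ⟨⟨m, i, u⟩ | ⟨m, i, u⟩ | ⟨m, i, j⟩ | ⟨c, m, i⟩, rfl⟩
  · exact h0 m i u
  · exact h1 m i u
  · rcases eq_or_ne i j with rfl | hij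
    · exact h2 m i _
    · have hsub : ε () * ((i : ℕ) - (j : ℕ) : ℂ) ≠ 0 :=
        mul_ne_zero hε0 (sub_ne_zero.2 fun h => hij (Fin.ext (Nat.cast_injective h)))
      refine (Submodule.smul_mem_iff _ hsub).1 ?_
      convert Submodule.sub_mem _ (h1 m i (w m j)) (h0 m j (v m i)) using 1
      funext l
      simp only [degenerationGen, z, Pi.add_apply, Pi.smul_apply, Pi.sub_apply, smul_eq_mul]
      module
  · exact h2 m i _

theorem nondefective_three {s k : ℕ} (h01 : a 0 ≤ a 1) (h12 : a 1 ≤ a 2) (h0 : 0 < a 0)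
    (hs : s * (1 + (a 0 + a 1 + a 2)) ≤ (a 0 + 1) * (a 1 + 1)) (hk : k ≤ (a 2 + 1) * s) :
    Nondefective 3 a k := by
  have hs0 : 2 * s ≤ a 0 + 1 := by
    by_contra! hlt
    nlinarith [Nat.mul_le_mul hlt (show 1 + (a 0 + a 1 + a 1) ≤ 1 + (a 0 + a 1 + a 2) by omega)]
  have hgen : ∀ l : Fin (a 2 + 1), Generically
      fun x : (Fin (a 2 + 1) × Fin s × (Fin (a 0 + 1) ⊕ Fin (a 1 + 1))) → ℂ =>
        s * (1 + (a 0 + a 1 + a 2)) ≤ Module.finrank ℂ (Submodule.span ℂ (Set.range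
          fun c => limitGen (fun m i y => x (m, i, .inl y)) (fun m i y => x (m, i, .inr y))
            l (l - 1) c)) := fun l => by
    have hcard : a 0 + 1 + (a 1 + 1) + (a 2 + 1 - 2) = 1 + (a 0 + a 1 + a 2) := by omega
    have hl : l - 1 ≠ l := by
      obtain ⟨n, hn⟩ : ∃ n, a 2 = n + 1 := ⟨a 2 - 1, by omega⟩
      generalize a 2 = c at hn l
      subst hn
      simp
    obtain ⟨v, w, hvw⟩ := exists_le_finrank_limitGen (α := Fin (a 0 + 1)) (β := Fin (a 1 + 1))
      (ι := Fin s) l (l - 1) hl (by simpa using hs0) (by simpa using hs0.trans (by omega))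
      (by simpa only [Fintype.card_fin, hcard] using hs)
    simp only [Fintype.card_fin, hcard] at hvw
    exact generically_le_finrank_span (fun c => isPolyMap_limitGen l (l - 1) c)
      (x₀ := fun y => Sum.elim (v y.1 y.2.1) (w y.1 y.2.1) y.2.2) hvw
  obtain ⟨x, hx⟩ := (Generically.forall hgen).exists
  obtain ⟨p, hp⟩ := exists_sum_finrank_limitGen_le (a := a)
    (fun m i y => x (m, i, .inl y)) (fun m i y => x (m, i, .inr y))
  have hle := (Finset.sum_le_sum fun l _ => hx l).trans hp
  obtain ⟨f⟩ := Function.Embedding.nonempty_of_card_le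
    (α := Fin k) (β := Fin (a 2 + 1) × Fin s) (by simpa using hk)
  refine ⟨fun i => p (f i), ?_⟩
  have := card_mul_le_finrank_iSup_comp (fun i => tangent a (p i)) _
    (fun i => finrank_tangent_le _) (le_trans (le_of_eq ?_) hle) f
  · simpa using this
  · simp only [Fintype.card_prod, Fintype.card_fin, Fin.sum_univ_three, Finset.sum_const,
      Finset.card_univ, smul_eq_mul]
    ring

end ThreeFactors

/-! ### Induction on the number of factors -/

section Induction

/-- The dimension of a Segre cone is at most that of its first three factors times the number of
coordinates on the remaining factors (the third one included). -/
theorem one_add_sum_le (n : ℕ) (a : Fin (n + 3) → ℕ) :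
    1 + ∑ i, a i ≤ (1 + (a 0 + a 1 + a 2)) * ∏ i : Fin (n + 1), (a i.succ.succ + 1) := by
  induction n with
  | zero =>
    rw [Fin.sum_univ_three]
    exact Nat.le_mul_of_pos_right _ (Finset.prod_pos fun _ _ => Nat.succ_pos _)
  | succ n ih =>
    rw [Fin.sum_univ_castSucc, Fin.prod_univ_castSucc]
    have h := ih fun i => a i.castSucc
    change 1 + ∑ i : Fin (n + 3), a i.castSucc ≤ (1 + (a 0 + a 1 + a 2)) *
      ∏ i : Fin (n + 1), (a i.castSucc.succ.succ + 1) at h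
    change _ ≤ _ * (_ * (a (Fin.last (n + 3)) + 1))
    nlinarith [Nat.zero_le (a (Fin.last (n + 3)) * ∑ i : Fin (n + 3), a i.castSucc),
      Nat.mul_le_mul_right (a (Fin.last (n + 3)) + 1) h]

/-- Nondefectivity in the range `k + 1 ≤ (a₀ a₁ - a₂) ∏ (aᵢ + 1) / (1 + ∑ aᵢ)`, rounded up, with the
product over `i ≥ 2`. -/
theorem nondefective_of_lt (n : ℕ) (a : Fin (n + 3) → ℕ) (c k : ℕ)
    (h01 : a 0 ≤ a 1) (h12 : a 1 ≤ a 2) (h0 : 0 < a 0) (hc : a 2 + c = a 0 * a 1)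
    (hk : k * (1 + ∑ i, a i) < c * ∏ i : Fin (n + 1), (a i.succ.succ + 1)) :
    Nondefective (n + 3) a (k + 1) := by
  induction n generalizing k with
  | zero =>
    have hdiv : k < (a 2 + 1) * (k / (a 2 + 1) + 1) := Nat.lt_mul_div_succ _ (Nat.succ_pos _)
    refine nondefective_three (s := k / (a 2 + 1) + 1) h01 h12 h0 ?_ hdiv
    have hle := Nat.div_mul_le_self k (a 2 + 1)
    generalize k / (a 2 + 1) = s at *
    have hprod : ∏ i : Fin (0 + 1), (a i.succ.succ + 1) = a 2 + 1 := Fin.prod_univ_one _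
    rw [hprod, Fin.sum_univ_three] at hk
    have hlt : s * (1 + (a 0 + a 1 + a 2)) < c := by
      refine lt_of_mul_lt_mul_right (lt_of_le_of_lt ?_ hk) (Nat.zero_le (a 2 + 1))
      calc _ = s * (a 2 + 1) * (1 + (a 0 + a 1 + a 2)) := by ring
        _ ≤ _ := Nat.mul_le_mul_right _ hle
    linarith [show (a 0 + 1) * (a 1 + 1) = a 0 * a 1 + a 0 + a 1 + 1 by ring]
  | succ n ih =>
    set b := a (Fin.last (n + 3)) + 1 with hb
    have hdiv : k < b * (k / b + 1) := Nat.lt_mul_div_succ _ (Nat.succ_pos _)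
    have hle := Nat.div_mul_le_self k b
    generalize k / b = s at *
    have hsum := one_add_sum_le n fun i => a i.castSucc
    change 1 + ∑ i : Fin (n + 3), a i.castSucc ≤ (1 + (a 0 + a 1 + a 2)) *
      ∏ i : Fin (n + 1), (a i.castSucc.succ.succ + 1) at hsum
    have hprod : ∏ i : Fin (n + 3), (a i.castSucc + 1) =
        (a 0 + 1) * ((a 1 + 1) * ∏ i : Fin (n + 1), (a i.castSucc.succ.succ + 1)) := by
      rw [Fin.prod_univ_succ, Fin.prod_univ_succ]
      rfl
    rw [Fin.sum_univ_castSucc, Fin.prod_univ_castSucc] at hk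
    change k * (1 + (∑ i : Fin (n + 3), a i.castSucc + a (Fin.last (n + 3)))) <
      c * ((∏ i : Fin (n + 1), (a i.castSucc.succ.succ + 1)) * b) at hk
    have ih := ih (fun i => a i.castSucc) s h01 h12 h0 hc
    change (s * (1 + ∑ i : Fin (n + 3), a i.castSucc) <
      c * ∏ i : Fin (n + 1), (a i.castSucc.succ.succ + 1) → _) at ih
    generalize ∏ i : Fin (n + 1), (a i.castSucc.succ.succ + 1) = P at *
    have hlt : ∀ t, t * b ≤ k * (1 + (∑ i : Fin (n + 3), a i.castSucc +
        a (Fin.last (n + 3)))) → t < c * P := fun t ht =>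
      lt_of_mul_lt_mul_right (ht.trans_lt (hk.trans_eq (mul_assoc _ _ _).symm)) (Nat.zero_le b)
    refine (ih (hlt _ ?_)).succ hdiv ?_
    · rw [mul_right_comm]
      exact Nat.mul_le_mul hle (by omega)
    · have hdim : s * ∑ i : Fin (n + 3), a i.castSucc + k < c * P := by
        refine hlt _ ?_
        calc _ = s * b * ∑ i : Fin (n + 3), a i.castSucc + k * b := by ring
          _ ≤ k * ∑ i : Fin (n + 3), a i.castSucc + k * b := by gcongr
          _ = _ := by rw [hb]; ring
      rw [hprod]
      calc _ = s * ∑ i : Fin (n + 3), a i.castSucc + k +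
            (1 + ∑ i : Fin (n + 3), a i.castSucc) := by ring
        _ ≤ c * P + (1 + (a 0 + a 1 + a 2)) * P := Nat.add_le_add hdim.le hsum
        _ = (a 2 + c + (1 + a 0 + a 1)) * P := by ring
        _ = _ := by rw [hc]; ring

end Induction

/-- for `k` in the range of Theorem `stmt_14`, the span of the `k`
tangent spaces at `k` general points has the expected dimension `k(1 + Σᵢ aᵢ)`
(equivalently, the `k`-th secant variety of the Segre has the expected dimension). -/
theorem stmt_15 (q : ℕ) (hq : 3 ≤ q) (a : Fin q → ℕ) (hmono : Monotone a)
    (ha : ∀ i, 0 < a i) (k : ℕ) (hk : 0 < k)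
    (hkb : (k : ℚ) ≤ ((∏ i, ((a i : ℚ) + 1)) -
        ((a ⟨0, by omega⟩ : ℚ) + (a ⟨1, by omega⟩ : ℚ) + (a ⟨2, by omega⟩ : ℚ) + 1) *
          ∏ i ∈ Finset.univ.filter (fun i : Fin q => 2 ≤ (i : ℕ)), ((a i : ℚ) + 1)) /
        (1 + ∑ i, (a i : ℚ))) :
    ∃ F : MvPolynomial (WIdx q a k) ℂ,
      (∃ p, evalW F p ≠ 0) ∧
      ∀ p : Fin k → ∀ j : Fin q, Fin (a j + 1) → ℂ, evalW F p ≠ 0 →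
        Module.finrank ℂ ↥(⨆ i, tangent a (p i)) = k * (1 + ∑ i, a i) := by
  refine Nondefective.generically ?_
  obtain ⟨n, rfl⟩ : ∃ n, q = n + 3 := ⟨q - 3, by omega⟩
  have h01 : a 0 ≤ a 1 := hmono (Fin.zero_le _)
  have h12 : a 1 ≤ a 2 := hmono (by simp [Fin.le_def, Nat.mod_eq_of_lt])
  have hfilter : ∏ i ∈ Finset.univ.filter (fun i : Fin (n + 3) => 2 ≤ (i : ℕ)),
      ((a i : ℚ) + 1) = ∏ i : Fin (n + 1), ((a i.succ.succ : ℚ) + 1) := by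
    rw [Finset.prod_filter, Fin.prod_univ_succ, Fin.prod_univ_succ]
    simp
  have hprod : ∏ i, ((a i : ℚ) + 1) =
      (a 0 + 1) * ((a 1 + 1) * ∏ i : Fin (n + 1), ((a i.succ.succ : ℚ) + 1)) := by
    rw [Fin.prod_univ_succ, Fin.prod_univ_succ]
    rfl
  have hP : (0 : ℚ) < ∏ i : Fin (n + 1), ((a i.succ.succ : ℚ) + 1) :=
    Finset.prod_pos fun _ _ => by positivity
  have hbound : (k : ℚ) * (1 + ∑ i, (a i : ℚ)) ≤
      (a 0 * a 1 - a 2) * ∏ i : Fin (n + 1), ((a i.succ.succ : ℚ) + 1) := by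
    refine ((le_div_iff₀ (by positivity)).1 hkb).trans_eq ?_
    rw [hfilter, hprod]
    change (_ : ℚ) - (a 0 + a 1 + a 2 + 1) * _ = _
    ring
  have hkS : (0 : ℚ) < k * (1 + ∑ i, (a i : ℚ)) := by positivity
  have hlt : a 2 < a 0 * a 1 := by
    have := pos_of_mul_pos_left (hkS.trans_le hbound) hP.le
    exact_mod_cast sub_pos.1 this
  obtain ⟨c, hc⟩ := Nat.exists_eq_add_of_lt hlt
  obtain ⟨k, rfl⟩ : ∃ k', k = k' + 1 := ⟨k - 1, by omega⟩
  refine nondefective_of_lt n a (c + 1) k h01 h12 (ha 0) (by omega) ?_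
  have hcQ : (a 0 * a 1 - a 2 : ℚ) = (c + 1 : ℕ) := by
    rw [sub_eq_iff_eq_add]
    exact_mod_cast (by omega : a 0 * a 1 = c + 1 + a 2)
  rw [hcQ] at hbound
  have hbound' : (k + 1) * (1 + ∑ i, a i) ≤
      (c + 1) * ∏ i : Fin (n + 1), (a i.succ.succ + 1) := by exact_mod_cast hbound
  exact (Nat.mul_lt_mul_of_pos_right k.lt_succ_self (by omega)).trans_le hbound'
end
end

section
/- Let q ≥ 3 and let a₁ ≤ a₂ ≤ ⋯ ≤ a_q be positive integers with a_q ≥ Π_{i=1}^{q−1}(a_i+1) − (2 + Σ_{i=1}^{q−1}a_i). Then for every positive integer k ≤ Π_{i=1}^{q−1}(a_i+1) − (1 + Σ_{i=1}^{q−1}a_i), the general tensor of rank k in ℂ^{a₁+1} ⊗ ⋯ ⊗ ℂ^{a_q+1} has a unique rank-k decomposition up to permutation of the summands; that is, the Segre product ℙ^{a₁}×⋯×ℙ^{a_q} is k-identifiable. -/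
open scoped TensorProduct
open PiTensorProduct

noncomputable section

/-- A derivation of a ring extends to every formally étale algebra over it. -/
theorem exists_derivation_extending {R S T : Type*} [CommRing R] [CommRing S] [CommRing T]
    [Algebra R S] [Algebra R T] [Algebra S T] [IsScalarTower R S T] [Algebra.FormallyEtale S T]
    (d : Derivation R S S) :
    ∃ D : Derivation R T T, ∀ s, D (algebraMap S T s) = algebraMap S T (d s) := by
  let e := KaehlerDifferential.tensorKaehlerEquivOfFormallyEtale R S T
  let l : Ω[S⁄R] →ₗ[S] T := (Algebra.linearMap S T).comp d.liftKaehlerDifferential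
  refine ⟨((l.liftBaseChange T).comp e.symm.toLinearMap).compDer (KaehlerDifferential.D R T),
    fun s => ?_⟩
  simp [e, l, KaehlerDifferential.tensorKaehlerEquivOfFormallyEtale_symm_D_algebraMap]

/-- The algebraic closure of the field of fractions of a domain of characteristic zero is
formally étale over the domain. -/
theorem formallyEtale_algebraicClosure_fractionRing (R : Type*) [CommRing R] [IsDomain R]
    [CharZero R] : Algebra.FormallyEtale R (AlgebraicClosure (FractionRing R)) := by
  have : Algebra.FormallyEtale R (FractionRing R) :=
    Algebra.FormallyEtale.of_isLocalization (nonZeroDivisors R)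
  have : Algebra.FormallyEtale (FractionRing R) (AlgebraicClosure (FractionRing R)) :=
    Algebra.FormallyEtale.of_isSeparable _ _
  exact Algebra.FormallyEtale.comp R (FractionRing R) _

theorem nonempty_algHom_algebraicClosure (k A : Type*) [Field k] [Field A] [Algebra k A]
    [Module.Finite k A] : Nonempty (A →ₐ[k] AlgebraicClosure k) :=
  ⟨IsAlgClosed.lift⟩

attribute [local instance] MvPolynomial.algebraMvPolynomial

/-- A polynomial system over a domain `R` without solutions in the algebraic closure of the field
of fractions of `R` has no solutions after specialization outside of a hypersurface. -/
theorem exists_ne_zero_forall_no_solution {R τ ε : Type*} [CommRing R] [IsDomain R] [Finite τ]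
    (E : ε → MvPolynomial τ R)
    (h : ∀ z : τ → AlgebraicClosure (FractionRing R), ∃ i, MvPolynomial.aeval z (E i) ≠ 0) :
    ∃ F : R, F ≠ 0 ∧ ∀ {L : Type} [Field L] (φ : R →+* L) (z : τ → L), φ F ≠ 0 →
      ∃ i, MvPolynomial.eval₂ φ z (E i) ≠ 0 := by
  let k := FractionRing R
  let I : Ideal (MvPolynomial τ R) := Ideal.span (Set.range E)
  have htop : I.map (algebraMap (MvPolynomial τ R) (MvPolynomial τ k)) = ⊤ := by
    by_contra hne
    obtain ⟨m, hm, hIm⟩ := Ideal.exists_le_maximal _ hne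
    let _ : Field (MvPolynomial τ k ⧸ m) := Ideal.Quotient.field m
    have : Module.Finite k (MvPolynomial τ k ⧸ m) :=
      finite_of_finite_type_of_isJacobsonRing k (MvPolynomial τ k ⧸ m)
    obtain ⟨ψ⟩ := nonempty_algHom_algebraicClosure k (MvPolynomial τ k ⧸ m)
    let χ : MvPolynomial τ k →ₐ[k] AlgebraicClosure k := ψ.comp (Ideal.Quotient.mkₐ k m)
    obtain ⟨i, hi⟩ := h fun t => χ (MvPolynomial.X t)
    apply hi
    have hmem : algebraMap (MvPolynomial τ R) (MvPolynomial τ k) (E i) ∈ m :=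
      hIm (Ideal.mem_map_of_mem _ (Ideal.subset_span ⟨i, rfl⟩))
    have hχ : χ (algebraMap (MvPolynomial τ R) (MvPolynomial τ k) (E i)) = 0 := by
      simp only [χ, AlgHom.comp_apply, Ideal.Quotient.mkₐ_eq_mk,
        Ideal.Quotient.eq_zero_iff_mem.mpr hmem, map_zero]
    rw [← hχ, MvPolynomial.algebraMap_def, ← MvPolynomial.aeval_map_algebraMap k]
    exact (DFunLike.congr_fun (MvPolynomial.aeval_unique χ) _).symm
  have hdis := mt (IsLocalization.map_algebraMap_ne_top_iff_disjoint
    ((nonZeroDivisors R).map (MvPolynomial.C (σ := τ))) (MvPolynomial τ k) I).mpr (not_not.mpr htop)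
  obtain ⟨x, ⟨F, hF, rfl⟩, hx⟩ := Set.not_disjoint_iff.mp hdis
  refine ⟨F, nonZeroDivisors.ne_zero hF, fun {L} _ φ z hφ => ?_⟩
  by_contra! hz
  apply hφ
  have hle : I ≤ RingHom.ker (MvPolynomial.eval₂Hom φ z) := by
    rw [Ideal.span_le]
    rintro _ ⟨i, rfl⟩
    exact hz i
  simpa using hle hx

/-- A finite linearly independent family has a dual family of linear forms. -/
theorem LinearIndependent.exists_dual_family {ω k V : Type*} [Field k] [AddCommGroup V]
    [Module k V] [Fintype ω] [DecidableEq ω] {v : ω → V} (h : LinearIndependent k v) :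
    ∃ φ : ω → V →ₗ[k] k, ∀ i j, φ i (v j) = if i = j then 1 else 0 := by
  obtain ⟨g, hg⟩ := (Fintype.linearCombination k v).exists_leftInverse_of_injective
    (LinearMap.ker_eq_bot.mpr (linearIndependent_iff_injective_fintypeLinearCombination.mp h))
  refine ⟨fun i => (LinearMap.proj i).comp g, fun i j => ?_⟩
  have := congrFun (LinearMap.congr_fun hg (Pi.single j 1)) i
  simpa [Pi.single_apply] using this

/-- Linear independence of the rows of a matrix of polynomials is an open condition. -/
theorem exists_ne_zero_forall_linearIndependent {σ ω β k : Type*} [Field k] [Fintype ω]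
    [DecidableEq ω] [Fintype β] (A : ω → β → MvPolynomial σ k) (p₀ : σ → k)
    (h : LinearIndependent k fun w f => MvPolynomial.eval p₀ (A w f)) :
    ∃ F : MvPolynomial σ k, F ≠ 0 ∧ ∀ {L : Type} [Field L] (φ : MvPolynomial σ k →+* L),
      φ F ≠ 0 → LinearIndependent L fun w f => φ (A w f) := by
  classical
  obtain ⟨l, hl⟩ := h.exists_dual_family
  let M : Matrix ω ω (MvPolynomial σ k) :=
    Matrix.of fun w w' => ∑ f, A w f * MvPolynomial.C (l w' (Pi.single f 1))
  refine ⟨M.det, fun h0 => ?_, fun {L} _ φ hφ => ?_⟩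
  · have hM : (MvPolynomial.eval p₀).mapMatrix M = 1 := by
      ext w w'
      have h1 : l w' (fun f => MvPolynomial.eval p₀ (A w f)) =
          ∑ f, MvPolynomial.eval p₀ (A w f) * l w' (Pi.single f 1) := by
        conv_lhs => rw [pi_eq_sum_univ' (fun f => MvPolynomial.eval p₀ (A w f))]
        simp [map_sum]
      rw [hl] at h1
      simp [M, ← h1, Matrix.one_apply, eq_comm]
    have h2 := congrArg (MvPolynomial.eval p₀) h0
    rw [RingHom.map_det, hM] at h2
    simp at h2
  · rw [RingHom.map_det] at hφ
    have h1 := Matrix.linearIndependent_rows_of_det_ne_zero hφ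
    refine LinearIndependent.of_comp
      (Matrix.of fun f w => φ (MvPolynomial.C (l w (Pi.single f 1)))).vecMulLinear ?_
    have h2 : ((Matrix.of fun f w => φ (MvPolynomial.C (l w (Pi.single f 1)))).vecMulLinear ∘
        fun w f => φ (A w f)) = fun w => φ.mapMatrix M w := by
      ext w w'
      simp [M, Matrix.vecMul, dotProduct]
    rw [h2]
    exact h1

section Segre

variable {ι : Type} [Fintype ι] {a : ι → ℕ}

/-- The coordinates of the decomposable tensor with factors `v`. -/
def segreVec {R : Type*} [CommRing R] (v : ∀ j, Fin (a j + 1) → R) (f : ∀ j, Fin (a j + 1)) : R :=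
  ∏ j, v j (f j)

theorem map_segreVec {R S : Type*} [CommRing R] [CommRing S] (φ : R →+* S)
    (v : ∀ j, Fin (a j + 1) → R) (f : ∀ j, Fin (a j + 1)) :
    φ (segreVec v f) = segreVec (fun j b => φ (v j b)) f := by
  simp [segreVec]

theorem segreVec_single {R : Type*} [CommRing R] (h : ∀ j, Fin (a j + 1)) :
    segreVec (a := a) (R := R) (fun j => Pi.single (h j) 1) = Pi.single h 1 := by
  ext f
  by_cases hf : f = h
  · subst hf; simp [segreVec]
  · obtain ⟨j, hj⟩ := Function.ne_iff.mp hf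
    rw [Pi.single_eq_of_ne hf]
    exact Finset.prod_eq_zero (Finset.mem_univ j) (Pi.single_eq_of_ne hj _)

variable [DecidableEq ι]

theorem segreVec_update {R : Type*} [CommRing R] (v : ∀ j, Fin (a j + 1) → R) (j : ι)
    (u : Fin (a j + 1) → R) (f : ∀ j, Fin (a j + 1)) :
    segreVec (Function.update v j u) f = (∏ l ∈ Finset.univ.erase j, v l (f l)) * u (f j) := by
  rw [segreVec, ← Finset.prod_erase_mul _ _ (Finset.mem_univ j), Function.update_self]
  congr 1
  refine Finset.prod_congr rfl fun l hl => ?_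
  rw [Function.update_of_ne (Finset.ne_of_mem_erase hl)]

theorem segreVec_update_eq_sum {R : Type*} [CommRing R] (v : ∀ j, Fin (a j + 1) → R) (j : ι)
    (u : Fin (a j + 1) → R) :
    segreVec (Function.update v j u) =
      ∑ b, u b • segreVec (Function.update v j (Pi.single b 1)) := by
  ext f
  simp [segreVec_update, Pi.single_apply, mul_comm]

theorem Derivation.map_finset_prod {ι A R : Type*} [CommRing R] [CommRing A] [Algebra R A]
    [DecidableEq ι] (D : Derivation R A A) (s : Finset ι) (g : ι → A) :
    D (∏ j ∈ s, g j) = ∑ j ∈ s, (∏ l ∈ s.erase j, g l) * D (g j) := by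
  induction s using Finset.induction_on with
  | empty => simp
  | insert i s hi ih =>
    rw [Finset.prod_insert hi, Finset.sum_insert hi, Finset.erase_insert hi, D.leibniz, ih,
      smul_eq_mul, smul_eq_mul, Finset.mul_sum, add_comm]
    congr 1
    refine Finset.sum_congr rfl fun j hj => ?_
    have hij : i ≠ j := fun h => hi (h ▸ hj)
    rw [Finset.erase_insert_of_ne hij, Finset.prod_insert (by simp [hi]), mul_assoc]

theorem Derivation.map_segreVec {A R : Type*} [CommRing R] [CommRing A] [Algebra R A]
    (D : Derivation R A A) (v : ∀ j, Fin (a j + 1) → A) (f : ∀ j, Fin (a j + 1)) :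
    D (segreVec v f) = ∑ j, segreVec (Function.update v j fun b => D (v j b)) f := by
  simp only [segreVec_update]
  exact D.map_finset_prod _ _

/-- The linear span of the points `x m` and of the tangent space at `y`, in coordinates. -/
def spanTangent {K κ : Type*} [Field K] (x : κ → ∀ j, Fin (a j + 1) → K)
    (y : ∀ j, Fin (a j + 1) → K) : Submodule K ((∀ j, Fin (a j + 1)) → K) :=
  Submodule.span K (Set.range fun m => segreVec (x m)) ⊔
    Submodule.span K (Set.range fun w : Σ j, Fin (a j + 1) =>
      segreVec (Function.update y w.1 (Pi.single w.2 1)))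

/-- If `y` lies on the span of the `x m`, then differentiating with respect to the coordinates
of `x i` shows that the tangent space at `x i` lies in the span of the `x m` and of the tangent
space at `y`. -/
theorem segreVec_update_mem_spanTangent {K R κ : Type*} [Field K] [CommRing R] [Algebra R K]
    [Fintype κ] [DecidableEq κ] (x : κ → ∀ j, Fin (a j + 1) → K) (y : ∀ j, Fin (a j + 1) → K)
    (c : κ → K) (hy : segreVec y = ∑ m, c m • segreVec (x m)) {i : κ} (hi : c i ≠ 0) (j : ι)
    (b : Fin (a j + 1)) (D : Derivation R K K)
    (hD : ∀ m l b', D (x m l b') =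
      if (⟨m, l, b'⟩ : κ × Σ j, Fin (a j + 1)) = ⟨i, j, b⟩ then 1 else 0) :
    segreVec (Function.update (x i) j (Pi.single b 1)) ∈ spanTangent x y := by
  have hDx : ∀ m f, D (segreVec (x m) f) =
      if m = i then segreVec (Function.update (x i) j (Pi.single b 1)) f else 0 := by
    intro m f
    rw [D.map_segreVec]
    split_ifs with hm
    · subst hm
      rw [Finset.sum_eq_single j]
      · congr 2
        ext b'
        simp [hD, Pi.single_apply]
      · intro l _ hl
        rw [segreVec_update, hD, if_neg (by simp [hl]), mul_zero]
      · simp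
    · refine Finset.sum_eq_zero fun l _ => ?_
      rw [segreVec_update, hD, if_neg (by simp [hm]), mul_zero]
  have key : c i • segreVec (Function.update (x i) j (Pi.single b 1)) =
      (∑ l, segreVec (Function.update y l fun b => D (y l b))) -
        ∑ m, D (c m) • segreVec (x m) := by
    ext f
    have h := congrArg D (congrFun hy f)
    rw [D.map_segreVec] at h
    simp only [Finset.sum_apply, Pi.smul_apply, smul_eq_mul, map_sum, D.leibniz, hDx,
      Finset.sum_add_distrib, mul_ite, mul_zero, Finset.sum_ite_eq', Finset.mem_univ,
      if_true] at h
    simp only [Pi.sub_apply, Finset.sum_apply, Pi.smul_apply, smul_eq_mul, h]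
    rw [add_sub_assoc, left_eq_add, sub_eq_zero]
    exact Finset.sum_congr rfl fun m _ => mul_comm _ _
  refine (Submodule.smul_mem_iff _ hi).mp (key ▸ Submodule.sub_mem _ ?_ ?_)
  · refine Submodule.sum_mem _ fun l _ => ?_
    rw [segreVec_update_eq_sum]
    exact Submodule.sum_mem _ fun b' _ => Submodule.smul_mem _ _
      (Submodule.mem_sup_right (Submodule.subset_span ⟨⟨l, b'⟩, rfl⟩))
  · exact Submodule.sum_mem _ fun m _ => Submodule.smul_mem _ _
      (Submodule.mem_sup_left (Submodule.subset_span ⟨m, rfl⟩))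

/-- The tangent space at a point of the span of the `x m` contributes at most `∑ j, a j` to the
dimension. -/
theorem finrank_spanTangent_le {K κ : Type*} [Field K] [Fintype κ]
    (x : κ → ∀ j, Fin (a j + 1) → K) (y : ∀ j, Fin (a j + 1) → K)
    (hy : segreVec y ∈ Submodule.span K (Set.range fun m => segreVec (x m))) (hy0 : ∀ j, y j ≠ 0) :
    Module.finrank K (spanTangent x y) ≤ Fintype.card κ + ∑ j, a j := by
  have hb : ∀ j, ∃ b, y j b ≠ 0 := fun j => Function.ne_iff.mp (hy0 j)
  choose b₀ hb₀ using hb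
  let g : κ ⊕ (Σ j, Fin (a j)) → (∀ j, Fin (a j + 1)) → K :=
    Sum.elim (fun m => segreVec (x m)) fun w =>
      segreVec (Function.update y w.1 (Pi.single ((b₀ w.1).succAbove w.2) 1))
  have hxg : Submodule.span K (Set.range fun m => segreVec (x m)) ≤
      Submodule.span K (Set.range g) :=
    Submodule.span_mono (Set.range_subset_iff.mpr fun m => ⟨Sum.inl m, rfl⟩)
  have hle : spanTangent x y ≤ Submodule.span K (Set.range g) := by
    refine sup_le hxg (Submodule.span_le.mpr ?_)
    rintro _ ⟨⟨j, b⟩, rfl⟩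
    have hmem : ∀ b', segreVec (Function.update y j (Pi.single ((b₀ j).succAbove b') 1)) ∈
        Submodule.span K (Set.range g) :=
      fun b' => Submodule.subset_span ⟨Sum.inr ⟨j, b'⟩, rfl⟩
    obtain rfl | ⟨b', rfl⟩ := (b₀ j).eq_self_or_eq_succAbove b
    · have h := segreVec_update_eq_sum y j (y j)
      rw [Function.update_eq_self, Fin.sum_univ_succAbove _ (b₀ j)] at h
      refine (Submodule.smul_mem_iff _ (hb₀ j)).mp ?_
      rw [eq_sub_of_add_eq h.symm]
      exact Submodule.sub_mem _ (hxg hy)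
        (Submodule.sum_mem _ fun b' _ => Submodule.smul_mem _ _ (hmem b'))
    · exact hmem b'
  calc Module.finrank K (spanTangent x y) ≤ Module.finrank K (Submodule.span K (Set.range g)) :=
        Submodule.finrank_mono hle
    _ ≤ Fintype.card (κ ⊕ (Σ j, Fin (a j))) := finrank_range_le_card g
    _ = Fintype.card κ + ∑ j, a j := by simp

end Segre

section Indices

variable {ι : Type} [DecidableEq ι] {a : ι → ℕ}

/-- The multi-index supported at `w.1` with the nonzero value determined by `w.2`. -/
def axisIndex (w : Σ j, Fin (a j)) : ∀ j, Fin (a j + 1) :=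
  Function.update 0 w.1 w.2.succ

theorem axisIndex_injective : Function.Injective (axisIndex (a := a)) := by
  rintro ⟨j, b⟩ ⟨l, b'⟩ h
  have hj : j = l := by
    by_contra hjl
    have := congrFun h j
    simp [axisIndex, Function.update_of_ne hjl, Fin.succ_ne_zero] at this
  subst hj
  have := congrFun h j
  simp only [axisIndex, Function.update_self, Fin.succ_inj] at this
  rw [this]

/-- A multi-index with at least two nonzero entries. -/
def IsOffAxis (f : ∀ j, Fin (a j + 1)) : Prop :=
  ∃ j l, j ≠ l ∧ f j ≠ 0 ∧ f l ≠ 0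

theorem not_isOffAxis_axisIndex (w : Σ j, Fin (a j)) : ¬ IsOffAxis (axisIndex w) := by
  rintro ⟨j, l, hjl, hj, hl⟩
  have h : ∀ m, axisIndex w m ≠ 0 → m = w.1 := fun m hm => by
    by_contra hne
    exact hm (by simp [axisIndex, Function.update_of_ne hne])
  exact hjl ((h j hj).trans (h l hl).symm)

theorem isOffAxis_or_eq (f : ∀ j, Fin (a j + 1)) :
    IsOffAxis f ∨ f = 0 ∨ ∃ w, f = axisIndex w := by
  by_cases hf : f = 0
  · exact Or.inr (Or.inl hf)
  obtain ⟨j, hj⟩ := Function.ne_iff.mp hf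
  by_cases h : ∃ l, l ≠ j ∧ f l ≠ 0
  · obtain ⟨l, hl, hfl⟩ := h
    exact Or.inl ⟨j, l, hl.symm, hj, hfl⟩
  · push Not at h
    obtain ⟨b, hb⟩ := Fin.exists_succ_eq.mpr hj
    refine Or.inr (Or.inr ⟨⟨j, b⟩, funext fun l => ?_⟩)
    by_cases hl : l = j
    · subst hl; simp [axisIndex, hb]
    · simp [axisIndex, Function.update_of_ne hl, h l hl]

/-- Two distinct multi-indices off the axes give two that differ in a single entry. -/
theorem exists_isOffAxis_update {f g : ∀ j, Fin (a j + 1)} (hf : IsOffAxis f) (hg : IsOffAxis g)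
    (hfg : f ≠ g) : ∃ j b, f j ≠ b ∧ IsOffAxis (Function.update f j b) := by
  by_contra! hcon
  have hoff : ∀ j, f j ≠ g j → ∀ l m, l ≠ m → l ≠ j → m ≠ j → f l ≠ 0 → f m = 0 := by
    intro j hj l m hlm hl hm hfl
    by_contra hfm
    exact hcon j (g j) hj ⟨l, m, hlm, by rwa [Function.update_of_ne hl],
      by rwa [Function.update_of_ne hm]⟩
  have hzero : ∀ j, f j = 0 → g j = 0 := by
    intro j hj
    by_contra hgj
    obtain ⟨l, m, hlm, hl, hm⟩ := hf
    exact hm (hoff j (by rw [hj]; exact Ne.symm hgj) l m hlm (fun h => hl (h ▸ hj))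
      (fun h => hm (h ▸ hj)) hl)
  obtain ⟨j, hj⟩ := Function.ne_iff.mp hfg
  obtain ⟨l, m, hlm, hl, hm⟩ := hg
  have hl' : f l ≠ 0 := fun h => hl (hzero l h)
  have hm' : f m ≠ 0 := fun h => hm (hzero m h)
  by_cases hjg : g j = 0
  · exact hm' (hoff j hj l m hlm (fun h => hl (h ▸ hjg)) (fun h => hm (h ▸ hjg)) hl')
  · have hex : ∃ n, n ≠ j ∧ f n ≠ 0 := by
      by_cases hlj : l = j
      · exact ⟨m, fun h => hlm (hlj.trans h.symm), hm'⟩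
      · exact ⟨l, hlj, hl'⟩
    obtain ⟨n, hn, hfn⟩ := hex
    exact hcon j (g j) hj ⟨n, j, hn, by rwa [Function.update_of_ne hn],
      by rwa [Function.update_self]⟩

variable [Fintype ι]

theorem prod_le_card_isOffAxis [DecidablePred (IsOffAxis (a := a))] :
    ∏ j, (a j + 1) ≤ Fintype.card {f : ∀ j, Fin (a j + 1) // IsOffAxis f} + ∑ j, a j + 1 := by
  let g : Option ({f : ∀ j, Fin (a j + 1) // IsOffAxis f} ⊕ Σ j, Fin (a j)) →
      ∀ j, Fin (a j + 1) := fun o => o.elim 0 (Sum.elim Subtype.val axisIndex)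
  have hg : Function.Surjective g := fun f => by
    obtain h | rfl | ⟨w, rfl⟩ := isOffAxis_or_eq f
    · exact ⟨some (Sum.inl ⟨f, h⟩), rfl⟩
    · exact ⟨none, rfl⟩
    · exact ⟨some (Sum.inr w), rfl⟩
  simpa using Fintype.card_le_of_surjective g hg

/-- The multi-indices of a configuration of coordinate points at which the expected dimension of
the span of the points and of a tangent space is exceeded. -/
theorem exists_index_configuration {κ : Type*} [Fintype κ] [DecidableEq κ]
    (hκ : Fintype.card κ + ∑ j, a j + 1 ≤ ∏ j, (a j + 1)) {i i' : κ} (hii' : i ≠ i') :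
    ∃ (f : κ → ∀ j, Fin (a j + 1)) (j : ι) (b : Fin (a j + 1)), f i = 0 ∧
      Function.Injective (Sum.elim axisIndex fun o : Option κ =>
        o.elim (Function.update (f i') j b) f) := by
  classical
  have hcard : Fintype.card κ ≤ Fintype.card {f : ∀ j, Fin (a j + 1) // IsOffAxis f} := by
    have := prod_le_card_isOffAxis (a := a)
    omega
  obtain ⟨e⟩ := Function.Embedding.nonempty_of_card_le hcard
  obtain ⟨j, b, hjb, hoff⟩ := exists_isOffAxis_update (e i').2 (e i).2
    (fun h => hii' (e.injective (Subtype.ext h)).symm)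
  let g : {f : ∀ j, Fin (a j + 1) // IsOffAxis f} := ⟨_, hoff⟩
  have hg : e i' ≠ g := fun h => hjb (by rw [h]; simp only [g, Function.update_self])
  let e' := e.trans (Equiv.swap (e i) g).toEmbedding
  have hi : e' i = g := by simp [e']
  have hi' : e' i' = e i' := by
    simp [e', Equiv.swap_apply_of_ne_of_ne (e.injective.ne hii'.symm) hg]
  have hne : ∀ m, ((e' m : ∀ j, Fin (a j + 1))) ≠ 0 := fun m h => by
    obtain ⟨l, _, _, hl, _⟩ := (e' m).2
    exact hl (by rw [h]; rfl)
  have hax : ∀ w m, axisIndex w ≠ (e' m : ∀ j, Fin (a j + 1)) := fun w m h =>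
    not_isOffAxis_axisIndex w (h ▸ (e' m).2)
  have hax0 : ∀ w : Σ j, Fin (a j), axisIndex w ≠ 0 := fun w h => by
    have := congrFun h w.1
    simp [axisIndex, Fin.succ_ne_zero] at this
  have hinj : ∀ m n, (e' m : ∀ j, Fin (a j + 1)) = e' n → m = n := fun m n h =>
    e'.injective (Subtype.ext h)
  let f : κ → ∀ j, Fin (a j + 1) := fun m => if m = i then 0 else e' m
  have hfi : f i = 0 := if_pos rfl
  have hf : ∀ m, m ≠ i → f m = e' m := fun m hm => if_neg hm
  have hnone : Function.update (f i') j b = e' i := by rw [hf i' hii'.symm, hi', hi]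
  have hf_ne : ∀ m, f m ≠ e' i := fun m h => by
    by_cases hm : m = i
    · exact hne i (by rw [← h, hm, hfi])
    · exact hm (hinj _ _ (by rw [← h, hf m hm]))
  refine ⟨f, j, b, hfi, axisIndex_injective.sumElim ?_ ?_⟩
  · rintro (_ | m) (_ | n) h
    · rfl
    · exact absurd (h.symm.trans hnone) (hf_ne n)
    · exact absurd (h.trans hnone) (hf_ne m)
    · replace h : f m = f n := h
      by_cases hm : m = i <;> by_cases hn : n = i
      · rw [hm, hn]
      · rw [hm, hfi, hf n hn] at h
        exact absurd h.symm (hne n)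
      · rw [hn, hfi, hf m hm] at h
        exact absurd h (hne m)
      · rw [hf m hm, hf n hn] at h
        rw [hinj _ _ h]
  · rintro w (_ | m) h
    · exact hax w i (h.trans hnone)
    · replace h : axisIndex w = f m := h
      by_cases hm : m = i
      · exact hax0 w (by rw [h, hm, hfi])
      · exact hax w m (by rw [h, hf m hm])

end Indices

section Generic

variable {ι : Type} [Fintype ι] [DecidableEq ι] {a : ι → ℕ}

theorem map_segreVec_update_single {R S : Type*} [CommRing R] [CommRing S] (φ : R →+* S)
    (v : ∀ j, Fin (a j + 1) → R) (j : ι) (b : Fin (a j + 1)) (f : ∀ j, Fin (a j + 1)) :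
    φ (segreVec (Function.update v j (Pi.single b 1)) f) =
      segreVec (Function.update (fun j b => φ (v j b)) j (Pi.single b 1)) f := by
  simp only [segreVec_update, map_mul, map_prod, Pi.single_apply]
  split_ifs <;> simp

theorem segreVec_update_single {R : Type*} [CommRing R] (h : ∀ j, Fin (a j + 1)) (j : ι)
    (b : Fin (a j + 1)) :
    segreVec (a := a) (R := R) (Function.update (fun j => Pi.single (h j) 1) j (Pi.single b 1)) =
      Pi.single (Function.update h j b) 1 := by
  rw [← segreVec_single]
  congr 1
  ext l : 1
  by_cases hl : l = j
  · subst hl; simp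
  · simp [Function.update_of_ne hl]

/-- The ring of polynomial functions on the `κ`-tuples of factor vectors. -/
abbrev GenericRing (a : ι → ℕ) (κ : Type) : Type :=
  MvPolynomial (κ × Σ j, Fin (a j + 1)) ℂ

/-- The coordinates of the generic `κ`-tuple of factor vectors. -/
def genericFactors (a : ι → ℕ) (κ : Type) (m : κ) (j : ι) (b : Fin (a j + 1)) :
    GenericRing a κ :=
  MvPolynomial.X (m, ⟨j, b⟩)

variable {κ : Type} [Fintype κ] [DecidableEq κ]

theorem linearIndependent_single_comp {ω β k : Type*} [Field k] [Finite β] [DecidableEq β]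
    (g : ω → β) (hg : Function.Injective g) :
    LinearIndependent k fun w => (Pi.single (g w) 1 : β → k) := by
  have := (Pi.basisFun k β).linearIndependent.comp g hg
  simpa [Function.comp_def] using this

/-- No point of the Segre variety over the algebraic closure of the field of rational functions is
a combination of the generic points with two nonzero coefficients. -/
theorem eq_zero_or_eq_zero_of_segreVec_eq_sum
    (hκ : Fintype.card κ + ∑ j, a j + 1 ≤ ∏ j, (a j + 1)) {i i' : κ} (hii' : i ≠ i')
    {K : Type} [Field K] [Algebra (GenericRing a κ) K]
    [Algebra ℂ K] [IsScalarTower ℂ (GenericRing a κ) K]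
    [FaithfulSMul (GenericRing a κ) K]
    [Algebra.FormallyEtale (GenericRing a κ) K]
    (y : ∀ j, Fin (a j + 1) → K) (c : κ → K)
    (hy : segreVec y = ∑ m, c m • segreVec fun j b => algebraMap _ K (genericFactors a κ m j b)) :
    c i = 0 ∨ c i' = 0 := by
  classical
  by_contra! hc
  let φ := algebraMap (GenericRing a κ) K
  let x : κ → ∀ j, Fin (a j + 1) → K := fun m j b => φ (genericFactors a κ m j b)
  obtain ⟨f, j₀, b₀, hfi, hinj⟩ := exists_index_configuration hκ hii'
  let A : (Σ j, Fin (a j)) ⊕ Option κ → (∀ j, Fin (a j + 1)) →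
      GenericRing a κ :=
    Sum.elim
      (fun w => segreVec (Function.update (genericFactors a κ i) w.1 (Pi.single w.2.succ 1)))
      fun o => o.elim (segreVec (Function.update (genericFactors a κ i') j₀ (Pi.single b₀ 1)))
        fun m => segreVec (genericFactors a κ m)
  let p₀ : (κ × Σ j, Fin (a j + 1)) → ℂ := fun w =>
    (Pi.single (f w.1 w.2.1) 1 : Fin (a w.2.1 + 1) → ℂ) w.2.2
  have hp₀ : ∀ m, (fun j b => MvPolynomial.eval p₀ (genericFactors a κ m j b)) =
      fun j => Pi.single (f m j) 1 := fun m => by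
    ext j b
    simp [genericFactors, p₀]
  have hA₀ : (fun w g => MvPolynomial.eval p₀ (A w g)) = fun w =>
      Pi.single (Sum.elim axisIndex (fun o : Option κ =>
        o.elim (Function.update (f i') j₀ b₀) f) w) 1 := by
    funext w
    rcases w with w | _ | m
    · funext g
      simp only [A, Sum.elim_inl, map_segreVec_update_single, hp₀, segreVec_update_single, hfi,
        axisIndex]
    · funext g
      simp only [A, Sum.elim_inr, Option.elim, map_segreVec_update_single, hp₀,
        segreVec_update_single]
    · funext g
      simp only [A, Sum.elim_inr, Option.elim, map_segreVec, hp₀, segreVec_single]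
  obtain ⟨F, hF, hind⟩ := exists_ne_zero_forall_linearIndependent A p₀
    (hA₀ ▸ linearIndependent_single_comp _ hinj)
  have hφ : φ F ≠ 0 := (map_ne_zero_iff φ (FaithfulSMul.algebraMap_injective _ K)).mpr hF
  have hli := hind φ hφ
  have hder : ∀ n, c n ≠ 0 → ∀ j b,
      segreVec (Function.update (x n) j (Pi.single b 1)) ∈ spanTangent x y := by
    intro n hn j b
    obtain ⟨D, hD⟩ := exists_derivation_extending (T := K)
      (MvPolynomial.pderiv (R := ℂ) (⟨n, j, b⟩ : κ × Σ j, Fin (a j + 1)))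
    refine segreVec_update_mem_spanTangent x y c hy hn j b D fun m l b' => ?_
    simp only [x, φ, hD, genericFactors, MvPolynomial.pderiv_X, Pi.single_apply]
    split_ifs <;> simp
  have hmem : ∀ w, (fun g => φ (A w g)) ∈ spanTangent x y := by
    rintro (w | _ | m)
    · convert hder i hc.1 w.1 w.2.succ using 1
      funext g
      simp only [A, Sum.elim_inl, map_segreVec_update_single, x]
    · convert hder i' hc.2 j₀ b₀ using 1
      funext g
      simp only [A, Sum.elim_inr, Option.elim, map_segreVec_update_single, x]
    · refine Submodule.mem_sup_left (Submodule.subset_span ⟨m, ?_⟩)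
      funext g
      simp only [A, Sum.elim_inr, Option.elim, map_segreVec, x]
  have hx : LinearIndependent K fun m => segreVec (x m) := by
    convert hli.comp (fun m => Sum.inr (some m)) (fun m n h => by simpa using h) using 1
    funext m g
    simp only [A, Sum.elim_inr, Option.elim, map_segreVec, x, Function.comp_apply]
  have hy0 : ∀ j, y j ≠ 0 := fun j hj => by
    refine hc.1 (Fintype.linearIndependent_iff.mp hx c ?_ i)
    rw [← hy]
    funext g
    exact Finset.prod_eq_zero (Finset.mem_univ j) (by simp [hj])
  have hyL : segreVec y ∈ Submodule.span K (Set.range fun m => segreVec (x m)) :=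
    hy ▸ Submodule.sum_mem _ fun m _ => Submodule.smul_mem _ _ (Submodule.subset_span ⟨m, rfl⟩)
  have hle := finrank_spanTangent_le x y hyL hy0
  have hge : Fintype.card ((Σ j, Fin (a j)) ⊕ Option κ) ≤ Module.finrank K (spanTangent x y) := by
    rw [← finrank_span_eq_card hli]
    exact Submodule.finrank_mono (Submodule.span_le.mpr (Set.range_subset_iff.mpr hmem))
  simp at hge
  omega

/-- General points of the Segre variety, at most as many as its codimension, are linearly
independent, and their span contains no other point of the Segre variety. -/
theorem exists_ne_zero_forall_span_inter_segre (a : ι → ℕ)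
    (hκ : Fintype.card κ + ∑ j, a j + 1 ≤ ∏ j, (a j + 1)) :
    ∃ F : GenericRing a κ, F ≠ 0 ∧
      ∀ p : κ → ∀ j, Fin (a j + 1) → ℂ, MvPolynomial.eval (fun w => p w.1 w.2.1 w.2.2) F ≠ 0 →
        LinearIndependent ℂ (fun m => segreVec (p m)) ∧
        ∀ (y : ∀ j, Fin (a j + 1) → ℂ) (c : κ → ℂ), segreVec y = ∑ m, c m • segreVec (p m) →
          ∀ i i', i ≠ i' → c i = 0 ∨ c i' = 0 := by
  classical
  let K := AlgebraicClosure (FractionRing (GenericRing a κ))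
  have : Algebra.FormallyEtale (GenericRing a κ) K :=
    formallyEtale_algebraicClosure_fractionRing (GenericRing a κ)
  have : FaithfulSMul (GenericRing a κ) K := by
    rw [faithfulSMul_iff_algebraMap_injective,
      IsScalarTower.algebraMap_eq (GenericRing a κ) (FractionRing (GenericRing a κ)) K]
    exact (algebraMap (FractionRing (GenericRing a κ)) K).injective.comp
      (IsFractionRing.injective _ _)
  have hpair : ∀ w : κ × κ, ∃ F : GenericRing a κ, F ≠ 0 ∧ ∀ p : κ → ∀ j, Fin (a j + 1) → ℂ,
      MvPolynomial.eval (fun w => p w.1 w.2.1 w.2.2) F ≠ 0 →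
        ∀ (y : ∀ j, Fin (a j + 1) → ℂ) (c : κ → ℂ), segreVec y = ∑ m, c m • segreVec (p m) →
          w.1 ≠ w.2 → c w.1 = 0 ∨ c w.2 = 0 := by
    rintro ⟨i, i'⟩
    by_cases hii' : i = i'
    · exact ⟨1, one_ne_zero, fun p _ y c _ h => absurd hii' h⟩
    let Y : ∀ j, Fin (a j + 1) → MvPolynomial (Option (κ ⊕ Σ j, Fin (a j + 1))) (GenericRing a κ) :=
      fun j b => MvPolynomial.X (some (Sum.inr ⟨j, b⟩))
    let C : κ → MvPolynomial (Option (κ ⊕ Σ j, Fin (a j + 1))) (GenericRing a κ) :=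
      fun m => MvPolynomial.X (some (Sum.inl m))
    let E : Option (∀ j, Fin (a j + 1)) →
        MvPolynomial (Option (κ ⊕ Σ j, Fin (a j + 1))) (GenericRing a κ) :=
      fun o => o.elim (C i * C i' * MvPolynomial.X none - 1) fun f =>
        segreVec Y f - ∑ m, C m * MvPolynomial.C (segreVec (genericFactors a κ m) f)
    have heval : ∀ {L : Type} [Field L] (ψ : GenericRing a κ →+* L)
        (z : Option (κ ⊕ Σ j, Fin (a j + 1)) → L) f,
        MvPolynomial.eval₂ ψ z (E (some f)) =
          segreVec (fun j b => z (some (Sum.inr ⟨j, b⟩))) f -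
            (∑ m, z (some (Sum.inl m)) •
              segreVec fun j b => ψ (genericFactors a κ m j b)) f := by
      intro L _ ψ z f
      rw [← MvPolynomial.coe_eval₂Hom]
      simp only [E, Y, C, Option.elim, map_sub, map_sum, map_mul, map_segreVec,
        MvPolynomial.eval₂Hom_X', MvPolynomial.eval₂Hom_C, Finset.sum_apply, Pi.smul_apply,
        smul_eq_mul]
    have heval_none : ∀ {L : Type} [Field L] (ψ : GenericRing a κ →+* L)
        (z : Option (κ ⊕ Σ j, Fin (a j + 1)) → L), MvPolynomial.eval₂ ψ z (E none) =
          z (some (Sum.inl i)) * z (some (Sum.inl i')) * z none - 1 := by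
      intro L _ ψ z
      rw [← MvPolynomial.coe_eval₂Hom]
      simp only [E, C, Option.elim, map_sub, map_mul, map_one, MvPolynomial.eval₂Hom_X']
    obtain ⟨F, hF, h⟩ := exists_ne_zero_forall_no_solution E fun z => by
      by_contra! hz
      simp only [MvPolynomial.aeval_def] at hz
      have hnone := (heval_none _ z).symm.trans (hz none)
      have hsome : segreVec (fun j b => z (some (Sum.inr ⟨j, b⟩))) =
          ∑ m, z (some (Sum.inl m)) •
            segreVec fun j b => algebraMap (GenericRing a κ) K (genericFactors a κ m j b) :=
        funext fun f => sub_eq_zero.mp ((heval _ z f).symm.trans (hz (some f)))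
      obtain h | h := eq_zero_or_eq_zero_of_segreVec_eq_sum hκ hii' _
          (fun m => z (some (Sum.inl m))) hsome <;>
        simp [h] at hnone
    refine ⟨F, hF, fun p hp y c hy _ => ?_⟩
    by_contra! hc
    obtain ⟨o, ho⟩ := h (MvPolynomial.eval fun w => p w.1 w.2.1 w.2.2)
      (fun o => o.elim (c i * c i')⁻¹ (Sum.elim c fun w => y w.1 w.2)) hp
    apply ho
    rcases o with _ | f
    · rw [heval_none]
      exact sub_eq_zero.mpr (mul_inv_cancel₀ (mul_ne_zero hc.1 hc.2))
    · rw [heval, sub_eq_zero]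
      simpa [genericFactors] using congrFun hy f
  obtain ⟨e⟩ : Nonempty (κ ↪ ∀ j, Fin (a j + 1)) :=
    Function.Embedding.nonempty_of_card_le (by simp; omega)
  obtain ⟨F₀, hF₀, hind⟩ := exists_ne_zero_forall_linearIndependent
    (fun m => segreVec (genericFactors a κ m))
    (fun w => (Pi.single (e w.1 w.2.1) 1 : Fin (a w.2.1 + 1) → ℂ) w.2.2) (by
      simpa only [map_segreVec, genericFactors, MvPolynomial.eval_X, segreVec_single] using
        linearIndependent_single_comp e e.injective)
  choose F hF h using hpair
  refine ⟨F₀ * ∏ w, F w, mul_ne_zero hF₀ (Finset.prod_ne_zero_iff.mpr fun w _ => hF w),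
    fun p hp => ?_⟩
  rw [map_mul, map_prod] at hp
  refine ⟨?_, fun y c hy i i' hii' => h (i, i') p
    (Finset.prod_ne_zero_iff.mp (right_ne_zero_of_mul hp) _ (Finset.mem_univ _)) y c hy hii'⟩
  simpa only [map_segreVec, genericFactors, MvPolynomial.eval_X] using
    hind _ (left_ne_zero_of_mul hp)

end Generic

/-- Two decompositions of a bilinear tensor with as many summands agree up to permutation, if in
one of them the factors are linearly independent on both sides and the first factors of the other
are multiples of the first factors of this one as soon as they lie in their span. -/
theorem exists_perm_of_sum_mul_eq {k κ G β : Type*} [Field k] [Fintype κ] [DecidableEq κ]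
    {X X' : κ → G → k} {w w' : κ → β → k} (hX : LinearIndependent k X)
    (hw : LinearIndependent k w)
    (hsum : ∀ g b, ∑ l, X' l g * w' l b = ∑ l, X l g * w l b)
    (hspan : ∀ (l : κ) (c : κ → k), X' l = ∑ m, c m • X m → ∀ i i', i ≠ i' → c i = 0 ∨ c i' = 0) :
    ∃ σ : Equiv.Perm κ, ∀ l g b, X' l g * w' l b = X (σ l) g * w (σ l) b := by
  obtain ⟨φ, hφ⟩ := hw.exists_dual_family
  have hXX' : ∀ i, X i = ∑ l, φ i (w' l) • X' l := by
    intro i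
    funext g
    have hg : ∑ l, X' l g • w' l = ∑ l, X l g • w l := by
      funext b
      simpa using hsum g b
    have h := congrArg (φ i) hg
    simp only [map_sum, map_smul, hφ, smul_eq_mul, mul_ite, mul_one, mul_zero,
      Finset.sum_ite_eq, Finset.mem_univ, if_true] at h
    simp only [← h, Finset.sum_apply, Pi.smul_apply, smul_eq_mul, mul_comm]
  have hle : Submodule.span k (Set.range X) ≤ Submodule.span k (Set.range X') := by
    rw [Submodule.span_le]
    rintro _ ⟨i, rfl⟩
    rw [hXX' i]
    exact Submodule.sum_mem _ fun l _ => Submodule.smul_mem _ _ (Submodule.subset_span ⟨l, rfl⟩)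
  have : FiniteDimensional k (Submodule.span k (Set.range X')) :=
    FiniteDimensional.span_of_finite k (Set.finite_range X')
  have hX' : LinearIndependent k X' := by
    rw [linearIndependent_iff_card_le_finrank_span, ← finrank_span_eq_card hX]
    exact Submodule.finrank_mono hle
  have hspan_eq : Submodule.span k (Set.range X) = Submodule.span k (Set.range X') :=
    Submodule.eq_of_le_of_finrank_le hle
      (by rw [finrank_span_eq_card hX, finrank_span_eq_card hX'])
  have hprop : ∀ l, ∃ (m : κ) (d : k), d ≠ 0 ∧ X' l = d • X m := by
    intro l
    have hmem : X' l ∈ Submodule.span k (Set.range X) :=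
      hspan_eq ▸ Submodule.subset_span ⟨l, rfl⟩
    obtain ⟨c, hc⟩ := (Submodule.mem_span_range_iff_exists_fun k).mp hmem
    have hex : ∃ m, c m ≠ 0 := by
      by_contra! h0
      exact hX'.ne_zero l (by simp [← hc, h0])
    obtain ⟨m, hm⟩ := hex
    refine ⟨m, c m, hm, ?_⟩
    rw [← hc]
    refine Finset.sum_eq_single m (fun n _ hn => ?_) (by simp)
    rw [(hspan l c hc.symm n m hn).resolve_right hm, zero_smul]
  choose σ d hd hσ using hprop
  have hinj : Function.Injective σ := by
    intro l l' hll'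
    by_contra hne
    have h := Fintype.linearIndependent_iff.mp hX' (Pi.single l (d l') - Pi.single l' (d l))
      (by simp [sub_smul, Finset.sum_sub_distrib, Pi.single_apply, hσ l, hσ l', hll', smul_smul,
        mul_comm]) l
    simp [Pi.single_eq_of_ne hne, hd l'] at h
  let τ : Equiv.Perm κ := Equiv.ofBijective σ (Finite.injective_iff_bijective.mp hinj)
  refine ⟨τ, fun l g b => ?_⟩
  have hcomb : ∑ l, (d l * w' l b - w (τ l) b) • X (τ l) = 0 := by
    funext g
    have h := hsum g b
    rw [← Equiv.sum_comp τ fun l => X l g * w l b] at h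
    simp only [Finset.sum_apply, Pi.smul_apply, smul_eq_mul, sub_mul, Finset.sum_sub_distrib,
      Pi.zero_apply, sub_eq_zero]
    simp only [hσ, Pi.smul_apply, smul_eq_mul] at h
    convert h using 2 <;> ring!
  have h := Fintype.linearIndependent_iff.mp (hX.comp τ τ.injective) _ hcomb l
  rw [← sub_eq_zero.mp h, hσ l]
  simp only [Pi.smul_apply, smul_eq_mul, τ, Equiv.ofBijective_apply]
  ring

section Tensor

variable {r : ℕ} {a : Fin (r + 1) → ℕ}

/-- The entries of a tensor, as a matrix indexed by the last factor and all the others. -/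
def flatten (t : Ten (r + 1) a) (g : ∀ j : Fin r, Fin (a j.castSucc + 1))
    (b : Fin (a (Fin.last r) + 1)) : ℂ :=
  (Basis.piTensorProduct fun j => Pi.basisFun ℂ (Fin (a j + 1))).repr t
    (Fin.snoc (α := fun j => Fin (a j + 1)) g b)

theorem flatten_tprod (v : ∀ j : Fin (r + 1), Fin (a j + 1) → ℂ)
    (g : ∀ j : Fin r, Fin (a j.castSucc + 1)) (b : Fin (a (Fin.last r) + 1)) :
    flatten (tprod ℂ v) g b = segreVec (fun j : Fin r => v j.castSucc) g * v (Fin.last r) b := by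
  simp [flatten, Basis.piTensorProduct_repr_tprod_apply, Fin.prod_univ_castSucc, segreVec]

theorem flatten_sum {κ : Type*} (s : Finset κ) (t : κ → Ten (r + 1) a)
    (g : ∀ j : Fin r, Fin (a j.castSucc + 1)) (b : Fin (a (Fin.last r) + 1)) :
    flatten (∑ l ∈ s, t l) g b = ∑ l ∈ s, flatten (t l) g b := by
  simp [flatten]

theorem flatten_injective : Function.Injective (flatten (a := a)) := by
  intro s t h
  refine (Basis.piTensorProduct fun j => Pi.basisFun ℂ (Fin (a j + 1))).repr.injective
    (Finsupp.ext fun f => ?_)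
  have := congrFun (congrFun h (Fin.init (α := fun j => Fin (a j + 1)) f)) (f (Fin.last r))
  simpa [flatten, Fin.snoc_init_self] using this

theorem identifiable_of_le {k : ℕ}
    (hk : k + ∑ j : Fin r, a j.castSucc + 1 ≤ ∏ j : Fin r, (a j.castSucc + 1))
    (hlast : k ≤ a (Fin.last r) + 1) : Identifiable (r + 1) a k := by
  obtain ⟨F₁, hF₁, h₁⟩ := exists_ne_zero_forall_span_inter_segre (κ := Fin k)
    (fun j : Fin r => a j.castSucc) (by simpa using hk)
  obtain ⟨F₂, hF₂, h₂⟩ := exists_ne_zero_forall_linearIndependent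
    (fun (m : Fin k) (b : Fin (a (Fin.last r) + 1)) =>
      (MvPolynomial.X (m, ⟨Fin.last r, b⟩) : MvPolynomial (WIdx (r + 1) a k) ℂ))
    (fun x => if (x.1 : ℕ) = x.2.2 then 1 else 0) (by
      convert linearIndependent_single_comp (k := ℂ) (Fin.castLE hlast)
        (Fin.castLE_injective hlast) using 1
      funext m b
      simp [Pi.single_apply, Fin.ext_iff, eq_comm])
  let e : (Fin k × Σ j : Fin r, Fin (a j.castSucc + 1)) → WIdx (r + 1) a k :=
    fun x => (x.1, ⟨x.2.1.castSucc, x.2.2⟩)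
  have he : Function.Injective e := by
    rintro ⟨m, j, b⟩ ⟨m', j', b'⟩ h
    simp only [e, Prod.mk.injEq, Sigma.mk.injEq, Fin.castSucc_inj] at h
    obtain ⟨rfl, rfl, h⟩ := h
    rw [eq_of_heq h]
  let F := MvPolynomial.rename e F₁ * F₂
  have hF : F ≠ 0 :=
    mul_ne_zero (fun h => hF₁ (MvPolynomial.rename_injective e he (by simpa using h))) hF₂
  refine ⟨F, ?_, fun p hp => ?_⟩
  · by_contra! h0
    exact hF (MvPolynomial.funext fun x => by
      simpa [evalW] using h0 fun m j b => x (m, ⟨j, b⟩))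
  rw [evalW, map_mul, MvPolynomial.eval_rename] at hp
  obtain ⟨hX, hspan⟩ := h₁ (fun m j => p m j.castSucc) (left_ne_zero_of_mul hp)
  have hw : LinearIndependent ℂ fun m => p m (Fin.last r) := by
    simpa only [MvPolynomial.eval_X] using h₂ _ (right_ne_zero_of_mul hp)
  have hperm : ∀ s : Fin k → Ten (r + 1) a, (∀ i, IsDecomposable (s i)) → ∑ i, s i = Phi a p →
      Finset.univ.val.map s = Finset.univ.val.map fun i => tprod ℂ (p i) := by
    intro s hs hsum
    choose v _ hv using hs
    obtain ⟨σ, hσ⟩ := exists_perm_of_sum_mul_eq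
      (X' := fun l => segreVec fun j => v l j.castSucc) (w' := fun l => v l (Fin.last r)) hX hw
      (fun g b => by
        have h := congrFun (congrFun (congrArg flatten hsum) g) b
        simpa only [Phi, flatten_sum, hv, flatten_tprod] using h)
      (fun l c hc => hspan _ c hc)
    have hsσ : s = (fun i => tprod ℂ (p i)) ∘ σ := by
      funext l
      refine flatten_injective (funext fun g => funext fun b => ?_)
      rw [hv, Function.comp_apply, flatten_tprod, flatten_tprod]
      exact hσ l g b
    rw [hsσ, ← Multiset.map_map]
    congr 1
    exact congrArg Finset.val (Finset.map_univ_equiv σ)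
  refine ⟨⟨fun i => tprod ℂ (p i), fun i => ⟨p i, fun j hj => ?_, rfl⟩, rfl⟩,
    fun s t hs ht hs' ht' => (hperm s hs hs').trans (hperm t ht ht').symm⟩
  induction j using Fin.lastCases with
  | last => exact hw.ne_zero i hj
  | cast j =>
    refine hX.ne_zero i (funext fun g => Finset.prod_eq_zero (Finset.mem_univ j) ?_)
    simp [hj]

end Tensor

/-- the unbalanced case; identifiability for
`k ≤ Π_{i<q}(aᵢ+1) - (1 + Σ_{i<q} aᵢ)` (products and sums over the first `q-1` factors). -/
theorem stmt_16 (q : ℕ) (hq : 3 ≤ q) (a : Fin q → ℕ) (hmono : Monotone a)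
    (ha : ∀ i, 0 < a i)
    (hbig : (∏ i ∈ Finset.univ.filter (fun i : Fin q => (i : ℕ) < q - 1), ((a i : ℤ) + 1)) -
        (2 + ∑ i ∈ Finset.univ.filter (fun i : Fin q => (i : ℕ) < q - 1), (a i : ℤ)) ≤ (a ⟨q - 1, by omega⟩ : ℤ))
    (k : ℕ) (hk : 0 < k)
    (hkb : (k : ℤ) ≤ (∏ i ∈ Finset.univ.filter (fun i : Fin q => (i : ℕ) < q - 1), ((a i : ℤ) + 1)) -
        (1 + ∑ i ∈ Finset.univ.filter (fun i : Fin q => (i : ℕ) < q - 1), (a i : ℤ))) :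
    Identifiable q a k := by
  obtain ⟨r, rfl⟩ : ∃ r, q = r + 1 := ⟨q - 1, by omega⟩
  simp only [Finset.prod_filter, Finset.sum_filter, Fin.prod_univ_castSucc, Fin.sum_univ_castSucc,
    Nat.add_sub_cancel, Fin.val_castSucc, Fin.is_lt, if_true, Fin.val_last, lt_irrefl, if_false,
    mul_one, add_zero] at hbig hkb
  have hlast : (⟨r, by omega⟩ : Fin (r + 1)) = Fin.last r := rfl
  rw [hlast] at hbig
  refine identifiable_of_le ?_ ?_
  · zify
    linarith
  · zify
    linarith
end
end
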